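/- arXiv:1612.07345 — 16 statements merged into one kernel-verified Lean document; each statement's English description precedes it below -/
import Mathlib

section
/- A subset α of L × B is an ideal element of ⊢ if and only if α is the graph of a bounded lattice homomorphism L → B, i.e. α is total and single-valued as a relation and the induced function preserves finite meets, finite joins, 0 and 1. -/
/-- An entailment relation on a set `S`: a relation between finite subsets of `S`
satisfying reflexivity (R), monotonicity (M) and transitivity/cut (T). -/
def IsEntailment {S : Type*} [DecidableEq S] (E : Finset S → Finset S → Prop) : Prop :=
  (∀ X Y : Finset S, (∃ x, x ∈ X ∧ x ∈ Y) → E X Y) ∧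
  (∀ X X' Y Y' : Finset S, E X Y → E (X ∪ X') (Y ∪ Y')) ∧
  (∀ X Y : Finset S, ∀ z : S, E X (insert z Y) → E (insert z X) Y → E X Y)

variable (M : Type*) (D : Type*) [Lattice M] [BoundedOrder M] [Lattice D] [BoundedOrder D]
  [Fintype D] [DecidableEq M] [DecidableEq D]

/-- The generating axioms (s), (∧), (∨), (0), (1), (t) for the entailment relation
of `D`-valued lattice maps on `M`. -/
def LatticeAxioms : Finset (M × D) → Finset (M × D) → Prop := fun X Y =>
  (∃ x a b, a ≠ b ∧ X = {(x, a), (x, b)} ∧ Y = ∅) ∨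
  (∃ x y a b, X = {(x, a), (y, b)} ∧ Y = {(x ⊓ y, a ⊓ b)}) ∨
  (∃ x y a b, X = {(x, a), (y, b)} ∧ Y = {(x ⊔ y, a ⊔ b)}) ∨
  (X = ∅ ∧ Y = {((⊥ : M), (⊥ : D))}) ∨
  (X = ∅ ∧ Y = {((⊤ : M), (⊤ : D))}) ∨
  (∃ x : M, X = ∅ ∧ Y = Finset.univ.image (fun a : D => (x, a)))

/-- The least entailment relation on `M × D` containing all the generating axioms:
the entailment relation of `D`-valued lattice maps on `M`. -/
def LatticeEntails (X Y : Finset (M × D)) : Prop :=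
  ∀ E : Finset (M × D) → Finset (M × D) → Prop,
    IsEntailment E → (∀ X' Y', LatticeAxioms M D X' Y' → E X' Y') → E X Y

/-- An ideal element (model, point) of an entailment relation `E` on `S`:
a subset splitting entailment. -/
def IsIdealElement {S : Type*} [DecidableEq S] (E : Finset S → Finset S → Prop)
    (α : Set S) : Prop :=
  ∀ X Y : Finset S, (↑X : Set S) ⊆ α → E X Y → ∃ y ∈ Y, y ∈ α

theorem stmt1 {L B : Type*} [DistribLattice L] [BoundedOrder L] [BooleanAlgebra B]
    [Fintype B] [DecidableEq L] [DecidableEq B] (α : Set (L × B)) :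
    IsIdealElement (LatticeEntails L B) α ↔
      ((∀ x : L, ∃! a : B, (x, a) ∈ α) ∧
       (∀ (x y : L) (a b : B), (x, a) ∈ α → (y, b) ∈ α → (x ⊓ y, a ⊓ b) ∈ α) ∧
       (∀ (x y : L) (a b : B), (x, a) ∈ α → (y, b) ∈ α → (x ⊔ y, a ⊔ b) ∈ α) ∧
       (((⊥ : L), (⊥ : B)) ∈ α) ∧ (((⊤ : L), (⊤ : B)) ∈ α)) := by
  constructor
  · intro h
    have key : ∀ X Y : Finset (L × B), LatticeAxioms L B X Y → (↑X : Set (L × B)) ⊆ α →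
        ∃ y ∈ Y, y ∈ α := fun X Y hA hX => h X Y hX (fun E _ hax => hax X Y hA)
    refine ⟨?_, ?_, ?_, ?_, ?_⟩
    · intro x
      obtain ⟨y, hy, hyα⟩ := key _ _
        (Or.inr (Or.inr (Or.inr (Or.inr (Or.inr ⟨x, rfl, rfl⟩))))) (by simp)
      obtain ⟨a, -, rfl⟩ := Finset.mem_image.1 hy
      refine ⟨a, hyα, ?_⟩
      intro b hb
      by_contra hne
      obtain ⟨y, hy, -⟩ := key _ _ (Or.inl ⟨x, b, a, hne, rfl, rfl⟩) (by
        intro z hz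
        simp only [Finset.coe_insert, Finset.coe_singleton, Set.mem_insert_iff,
          Set.mem_singleton_iff] at hz
        rcases hz with rfl | rfl
        · exact hb
        · exact hyα)
      simp at hy
    · intro x y a b ha hb
      obtain ⟨y, hy, hyα⟩ := key _ _ (Or.inr (Or.inl ⟨x, y, a, b, rfl, rfl⟩)) (by
        intro z hz
        simp only [Finset.coe_insert, Finset.coe_singleton, Set.mem_insert_iff,
          Set.mem_singleton_iff] at hz
        rcases hz with rfl | rfl
        · exact ha
        · exact hb)
      rw [Finset.mem_singleton] at hy
      exact hy ▸ hyα
    · intro x y a b ha hb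
      obtain ⟨y, hy, hyα⟩ := key _ _ (Or.inr (Or.inr (Or.inl ⟨x, y, a, b, rfl, rfl⟩))) (by
        intro z hz
        simp only [Finset.coe_insert, Finset.coe_singleton, Set.mem_insert_iff,
          Set.mem_singleton_iff] at hz
        rcases hz with rfl | rfl
        · exact ha
        · exact hb)
      rw [Finset.mem_singleton] at hy
      exact hy ▸ hyα
    · obtain ⟨y, hy, hyα⟩ := key _ _
        (Or.inr (Or.inr (Or.inr (Or.inl ⟨rfl, rfl⟩)))) (by simp)
      rw [Finset.mem_singleton] at hy
      exact hy ▸ hyα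
    · obtain ⟨y, hy, hyα⟩ := key _ _
        (Or.inr (Or.inr (Or.inr (Or.inr (Or.inl ⟨rfl, rfl⟩))))) (by simp)
      rw [Finset.mem_singleton] at hy
      exact hy ▸ hyα
  · rintro ⟨hfun, hinf, hsup, hbot, htop⟩ X Y hX hE
    refine hE (fun X Y => (↑X : Set (L × B)) ⊆ α → ∃ y ∈ Y, y ∈ α) ⟨?_, ?_, ?_⟩ ?_ hX
    · rintro X Y ⟨x, hx, hy⟩ h
      exact ⟨x, hy, h hx⟩
    · intro X X' Y Y' h hs
      obtain ⟨y, hy, hα⟩ := h (fun z hz => hs (by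
        simp only [Finset.mem_coe, Finset.mem_union] at hz ⊢
        exact Or.inl hz))
      exact ⟨y, Finset.mem_union_left _ hy, hα⟩
    · intro X Y z h1 h2 hs
      obtain ⟨y, hy, hα⟩ := h1 hs
      rcases Finset.mem_insert.1 hy with rfl | hy
      · refine h2 ?_
        rw [Finset.coe_insert]
        exact Set.insert_subset hα hs
      · exact ⟨y, hy, hα⟩
    · rintro X Y (⟨x, a, b, hne, rfl, rfl⟩ | ⟨x, y, a, b, rfl, rfl⟩ | ⟨x, y, a, b, rfl, rfl⟩ |
        ⟨rfl, rfl⟩ | ⟨rfl, rfl⟩ | ⟨x, rfl, rfl⟩) hs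
      · exact absurd ((hfun x).unique (hs (by simp)) (hs (by simp))) hne
      · exact ⟨_, Finset.mem_singleton_self _, hinf x y a b (hs (by simp)) (hs (by simp))⟩
      · exact ⟨_, Finset.mem_singleton_self _, hsup x y a b (hs (by simp)) (hs (by simp))⟩
      · exact ⟨_, Finset.mem_singleton_self _, hbot⟩
      · exact ⟨_, Finset.mem_singleton_self _, htop⟩
      · obtain ⟨a, ha, -⟩ := hfun x
        exact ⟨(x, a), Finset.mem_image_of_mem _ (Finset.mem_univ a), ha⟩
end

section
/- For all x, y ∈ L and a, b ∈ B, if x ≤ y in L and a ≰ b in B, then {(x,a), (y,b)} ⊢ ∅. -/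
variable (M : Type*) (D : Type*) [Lattice M] [BoundedOrder M] [Lattice D] [BoundedOrder D]
  [Fintype D] [DecidableEq M] [DecidableEq D]

theorem stmt2 {L B : Type*} [DistribLattice L] [BoundedOrder L] [BooleanAlgebra B]
    [Fintype B] [DecidableEq L] [DecidableEq B]
    (x y : L) (a b : B) (hxy : x ≤ y) (hab : ¬ a ≤ b) :
    LatticeEntails L B {(x, a), (y, b)} ∅ := by
  intro E hE hA
  obtain ⟨-, hM, hT⟩ := hE
  have h1 : E {(x, a), (y, b)} {(x, a ⊓ b)} :=
    hA _ _ (Or.inr (Or.inl ⟨x, y, a, b, rfl, by rw [inf_eq_left.mpr hxy]⟩))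
  have hne : a ⊓ b ≠ a := fun h => hab (inf_eq_left.mp h)
  have h2 : E {(x, a ⊓ b), (x, a)} ∅ :=
    hA _ _ (Or.inl ⟨x, a ⊓ b, a, hne, rfl, rfl⟩)
  have h3 := hM _ {(y, b)} _ ∅ h2
  refine hT _ _ (x, a ⊓ b) h1 ?_
  convert h3 using 1
  · ext p
    simp only [Finset.mem_insert, Finset.mem_singleton, Finset.mem_union]
    tauto
  · simp
end

section
/- For every finite subset X of L × B, every finite subset Y of L × B, and all x ∈ L, a ∈ B, the following are equivalent: (1) X ⊢ {(x,a)} ∪ Y; (2) X ∪ {(x,b)} ⊢ Y for every b ∈ B with b ≠ a. -/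
variable (M : Type*) (D : Type*) [Lattice M] [BoundedOrder M] [Lattice D] [BoundedOrder D]
  [Fintype D] [DecidableEq M] [DecidableEq D]

theorem stmt3 {L B : Type*} [DistribLattice L] [BoundedOrder L] [BooleanAlgebra B]
    [Fintype B] [DecidableEq L] [DecidableEq B]
    (X Y : Finset (L × B)) (x : L) (a : B) :
    LatticeEntails L B X (insert (x, a) Y) ↔
      ∀ b : B, b ≠ a → LatticeEntails L B (insert (x, b) X) Y := by
  constructor
  · intro h b hb E hE hA
    obtain ⟨hR, hM, hT⟩ := hE
    have h1 : E X (insert (x, a) Y) := h E ⟨hR, hM, hT⟩ hA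
    have h2 : E {(x, a), (x, b)} ∅ := hA _ _ (Or.inl ⟨x, a, b, hb.symm, rfl, rfl⟩)
    apply hT _ _ (x, a)
    · have h3 := hM _ {(x, b)} _ ∅ h1
      have e : X ∪ {(x, b)} = insert (x, b) X := by ext; simp [or_comm]
      rw [e, Finset.union_empty] at h3
      exact h3
    · have h3 := hM _ X _ Y h2
      have e : ({(x, a), (x, b)} : Finset (L × B)) ∪ X = insert (x, a) (insert (x, b) X) := by
        ext; simp
      rw [e, Finset.empty_union] at h3
      exact h3
  · intro h E hE hA
    have h' : ∀ b : B, b ≠ a → E (insert (x, b) X) Y := fun b hb => h b hb E hE hA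
    obtain ⟨hR, hM, hT⟩ := hE
    have ht : E ∅ (Finset.univ.image (fun c : B => (x, c))) :=
      hA _ _ (Or.inr (Or.inr (Or.inr (Or.inr (Or.inr ⟨x, rfl, rfl⟩)))))
    have key : ∀ S : Finset B,
        E X (S.image (fun c : B => (x, c)) ∪ insert (x, a) Y) → E X (insert (x, a) Y) := by
      intro S
      induction S using Finset.induction_on with
      | empty => intro hS; simpa using hS
      | insert c S _ ih =>
        intro hS
        apply ih
        rw [Finset.image_insert, Finset.insert_union] at hS
        by_cases hc : c = a
        · subst hc
          rwa [Finset.insert_eq_of_mem (by simp)] at hS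
        · apply hT _ _ (x, c) hS
          have h3 := hM _ ∅ _ (S.image (fun c : B => (x, c)) ∪ insert (x, a) Y) (h' c hc)
          have e : Y ∪ (S.image (fun c : B => (x, c)) ∪ insert (x, a) Y)
              = S.image (fun c : B => (x, c)) ∪ insert (x, a) Y := by
            apply Finset.union_eq_right.mpr
            intro z hz
            simp [hz]
          rw [e, Finset.union_empty] at h3
          exact h3
    apply key Finset.univ
    have h3 := hM _ X _ (insert (x, a) Y) ht
    rwa [Finset.empty_union] at h3
end

section
/- Let X be a finite subset of L × B. If there exists an atom e of B such that ⋀_{a ≥ e} ⋀ X_a ≤ ⋁_{a ≥ e} ⋁ X_{-a} holds in L (the meet ranging over all x ∈ X_a for all a ∈ B with e ≤ a, the join over all x ∈ X_{-a} for all a ∈ B with e ≤ a), then X is inconsistent, i.e. X ⊢ ∅. -/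
variable (M : Type*) (D : Type*) [Lattice M] [BoundedOrder M] [Lattice D] [BoundedOrder D]
  [Fintype D] [DecidableEq M] [DecidableEq D]

/-- `⋀_{a ≥ e} ⋀ X_a`: the meet in `L` over all `x` with `(x, a) ∈ X` for some `a ≥ e`;
the empty meet is `⊤`. -/
def atomMeet {L B : Type*} [Lattice L] [OrderTop L] [BooleanAlgebra B] [DecidableRel ((· ≤ ·) : B → B → Prop)]
    (e : B) (X : Finset (L × B)) : L :=
  (X.filter fun p => e ≤ p.2).inf Prod.fst

/-- `⋁_{a ≥ e} ⋁ X_{-a}`: the join in `L` over all `x` with `(x, aᶜ) ∈ X` for some `a ≥ e`;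
the empty join is `⊥`. -/
def atomJoin {L B : Type*} [Lattice L] [OrderBot L] [BooleanAlgebra B] [DecidableRel ((· ≤ ·) : B → B → Prop)]
    (e : B) (X : Finset (L × B)) : L :=
  (X.filter fun p => e ≤ p.2ᶜ).sup Prod.fst

theorem entails_cut {S : Type*} [DecidableEq S] {E : Finset S → Finset S → Prop}
    (hE : IsEntailment E) {X Y : Finset S} {p q : S}
    (hp : E X {p}) (hq : E X {q}) (h : E {p, q} Y) : E X Y := by
  obtain ⟨-, hM, hT⟩ := hE
  have mono : ∀ {X X' Y Y' : Finset S}, E X Y → X ⊆ X' → Y ⊆ Y' → E X' Y' := by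
    intro X X' Y Y' h h1 h2
    have := hM X X' Y Y' h
    rwa [Finset.union_eq_right.2 h1, Finset.union_eq_right.2 h2] at this
  refine hT X Y p (mono hp subset_rfl (by simp)) ?_
  refine hT _ Y q (mono hq (Finset.subset_insert _ _) (by simp)) ?_
  refine mono h ?_ subset_rfl
  intro z hz
  simp only [Finset.mem_insert, Finset.mem_singleton] at hz ⊢
  tauto

theorem stmt4 {L B : Type*} [DistribLattice L] [BoundedOrder L] [BooleanAlgebra B]
    [Fintype B] [DecidableEq L] [DecidableEq B] [DecidableRel ((· ≤ ·) : B → B → Prop)]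
    (X : Finset (L × B))
    (h : ∃ e : B, IsAtom e ∧ atomMeet e X ≤ atomJoin e X) :
    LatticeEntails L B X ∅ := by
  obtain ⟨e, he, hle⟩ := h
  intro E hE hA
  have hR : ∀ p ∈ X, E X {p} := fun p hp => hE.1 _ _ ⟨p, hp, by simp⟩
  have hempty : ∀ {Y}, E ∅ Y → E X Y := by
    intro Y h
    simpa using hE.2.1 ∅ X Y ∅ h
  have key1 : ∀ S : Finset (L × B), (∀ p ∈ S, p ∈ X ∧ e ≤ p.2) →
      ∃ α, e ≤ α ∧ E X {(S.inf Prod.fst, α)} := by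
    intro S
    induction S using Finset.induction_on with
    | empty =>
      intro _
      refine ⟨⊤, le_top, hempty (hA _ _ ?_)⟩
      simp [LatticeAxioms]
    | insert p S hp ih =>
      intro hS
      obtain ⟨α, hα, hα'⟩ := ih fun q hq => hS q (Finset.mem_insert_of_mem hq)
      obtain ⟨h1, h2⟩ := hS p (Finset.mem_insert_self _ _)
      refine ⟨p.2 ⊓ α, le_inf h2 hα, ?_⟩
      rw [Finset.inf_insert]
      exact entails_cut hE (hR p h1) hα'
        (hA _ _ (Or.inr (Or.inl ⟨p.1, _, p.2, α, rfl, rfl⟩)))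
  have key2 : ∀ S : Finset (L × B), (∀ p ∈ S, p ∈ X ∧ e ≤ p.2ᶜ) →
      ∃ α, e ≤ αᶜ ∧ E X {(S.sup Prod.fst, α)} := by
    intro S
    induction S using Finset.induction_on with
    | empty =>
      intro _
      refine ⟨⊥, by simp, hempty (hA _ _ ?_)⟩
      simp [LatticeAxioms]
    | insert p S hp ih =>
      intro hS
      obtain ⟨α, hα, hα'⟩ := ih fun q hq => hS q (Finset.mem_insert_of_mem hq)
      obtain ⟨h1, h2⟩ := hS p (Finset.mem_insert_self _ _)
      refine ⟨p.2 ⊔ α, by rw [compl_sup]; exact le_inf h2 hα, ?_⟩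
      rw [Finset.sup_insert]
      exact entails_cut hE (hR p h1) hα'
        (hA _ _ (Or.inr (Or.inr (Or.inl ⟨p.1, _, p.2, α, rfl, rfl⟩))))
  obtain ⟨α, hα, h1⟩ := key1 (X.filter fun p => e ≤ p.2) (by simp)
  obtain ⟨β, hβ, h2⟩ := key2 (X.filter fun p => e ≤ p.2ᶜ) (by simp)
  change E X {(atomMeet e X, α)} at h1
  change E X {(atomJoin e X, β)} at h2
  have h3 : E X {(atomJoin e X, α ⊔ β)} :=
    entails_cut hE h1 h2 (hA _ _ (Or.inr (Or.inr (Or.inl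
      ⟨_, _, α, β, rfl, by rw [sup_eq_right.2 hle]⟩))))
  refine entails_cut hE h3 h2 (hA _ _ (Or.inl ⟨_, _, _, ?_, rfl, rfl⟩))
  intro hab
  have : e ≤ β := hα.trans (sup_eq_right.1 hab)
  exact he.1 (le_bot_iff.1 ((le_inf this hβ).trans (by simp)))
end

section
/- Let A be a finite inhabited set and let L and R be subsets of A. If for every finite subset U of A there exists an element a ∈ A such that (a ∈ U and a ∈ L) or (a ∉ U and a ∈ R), then L and R have an element in common, i.e. L ∩ R is inhabited. -/
theorem stmt5 {A : Type*} [Fintype A] [Nonempty A] (L R : Set A)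
    (h : ∀ U : Finset A, ∃ a : A, (a ∈ U ∧ a ∈ L) ∨ (a ∉ U ∧ a ∈ R)) :
    (L ∩ R).Nonempty := by
  classical
  obtain ⟨a, ha⟩ := h (Finset.univ.filter (fun a => a ∉ L))
  simp only [Finset.mem_filter, Finset.mem_univ, true_and, not_not] at ha
  rcases ha with ⟨h1, h2⟩ | ⟨h1, h2⟩
  · exact absurd h2 h1
  · exact ⟨a, h1, h2⟩
end

section
/- Let L be a bounded distributive lattice, B a finite Boolean algebra, X a finite subset of L × B, and x ∈ L. If for every b ∈ B there exists an atom e of B such that ⋀_{a ≥ e} ⋀ (X ∪ {(x,b)})_a ≤ ⋁_{a ≥ e} ⋁ (X ∪ {(x,b)})_{-a} holds in L, then there exists an atom e' of B such that ⋀_{a ≥ e'} ⋀ X_a ≤ ⋁_{a ≥ e'} ⋁ X_{-a} holds in L. -/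
theorem stmt6 {L B : Type*} [DistribLattice L] [BoundedOrder L] [BooleanAlgebra B]
    [Fintype B] [DecidableEq L] [DecidableEq B] [DecidableRel ((· ≤ ·) : B → B → Prop)]
    (X : Finset (L × B)) (x : L)
    (h : ∀ b : B, ∃ e : B, IsAtom e ∧
      atomMeet e (insert (x, b) X) ≤ atomJoin e (insert (x, b) X)) :
    ∃ e' : B, IsAtom e' ∧ atomMeet e' X ≤ atomJoin e' X := by
  classical
  let S : Finset B := Finset.univ.filter
    fun e => IsAtom e ∧ ¬ (x ⊓ atomMeet e X ≤ atomJoin e X)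
  obtain ⟨e, he, hle⟩ := h (S.sup id)
  by_cases hb : e ≤ S.sup id
  · exfalso
    have hnb : ¬ e ≤ (S.sup id)ᶜ := fun hc =>
      he.1 (le_bot_iff.mp ((le_inf hb hc).trans (inf_compl_self _).le))
    have hS : e ∈ S := by
      by_contra hne
      have hd : Disjoint e (S.sup id) := by
        rw [Finset.disjoint_sup_right]
        intro f hf
        have hfa : IsAtom f := (Finset.mem_filter.mp hf).2.1
        exact he.disjoint_of_ne hfa (fun heq => hne (heq ▸ hf))
      exact hnb hd.le_compl_right
    have h2 := (Finset.mem_filter.mp hS).2.2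
    apply h2
    unfold atomMeet atomJoin at hle ⊢
    rw [Finset.filter_insert, Finset.filter_insert, if_pos hb, if_neg hnb,
      Finset.inf_insert] at hle
    exact hle
  · have hc : e ≤ (S.sup id)ᶜ :=
      ((he.not_le_iff_disjoint).mp hb).le_compl_right
    have hS : e ∉ S := fun hm => hb (Finset.le_sup (f := id) hm)
    have h1 : x ⊓ atomMeet e X ≤ atomJoin e X := by
      by_contra hn
      exact hS (Finset.mem_filter.mpr ⟨Finset.mem_univ _, he, hn⟩)
    have h2 : atomMeet e X ≤ x ⊔ atomJoin e X := by
      unfold atomMeet atomJoin at hle ⊢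
      rw [Finset.filter_insert, Finset.filter_insert, if_neg hb, if_pos hc,
        Finset.sup_insert] at hle
      exact hle
    refine ⟨e, he, ?_⟩
    calc atomMeet e X ≤ atomMeet e X ⊓ (x ⊔ atomJoin e X) := le_inf le_rfl h2
      _ = (atomMeet e X ⊓ x) ⊔ (atomMeet e X ⊓ atomJoin e X) := inf_sup_left _ _ _
      _ ≤ atomJoin e X := sup_le (by rw [inf_comm]; exact h1) inf_le_right
end

section
/- (Weak Nullstellensatz.) For every finite subset X of L × B, the following are equivalent: (1) X ⊢ ∅; (2) there exists an atom e of B such that ⋀_{a ≥ e} ⋀ X_a ≤ ⋁_{a ≥ e} ⋁ X_{-a} holds in L. -/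
variable (M : Type*) (D : Type*) [Lattice M] [BoundedOrder M] [Lattice D] [BoundedOrder D]
  [Fintype D] [DecidableEq M] [DecidableEq D]

namespace Stmt7Aux

lemma atom_not_le {B : Type*} [BooleanAlgebra B] {e a : B} (he : IsAtom e) :
    ¬ e ≤ a ↔ e ≤ aᶜ := by
  constructor
  · intro h
    rw [le_compl_iff_disjoint_right]
    exact disjoint_iff.mpr ((he.le_iff.mp inf_le_left).resolve_right
      (fun h' => h (h' ▸ inf_le_right)))
  · intro h h'
    exact he.1 (le_bot_iff.mp ((le_inf h' h).trans (by simp)))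

lemma atom_le_sup {B : Type*} [BooleanAlgebra B] {e a b : B} (he : IsAtom e) :
    e ≤ a ⊔ b ↔ e ≤ a ∨ e ≤ b := by
  constructor
  · intro h
    by_contra hc
    push Not at hc
    have h1 := (atom_not_le he).mp hc.1
    have h2 := (atom_not_le he).mp hc.2
    have h3 : e ≤ (a ⊔ b)ᶜ := by rw [compl_sup]; exact le_inf h1 h2
    exact (atom_not_le he).mpr h3 h
  · rintro (h | h)
    · exact h.trans le_sup_left
    · exact h.trans le_sup_right

lemma le_of_atoms {B : Type*} [BooleanAlgebra B] [Fintype B] {a b : B}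
    (h : ∀ e : B, IsAtom e → e ≤ a → e ≤ b) : a ≤ b := by
  rcases IsAtomic.eq_bot_or_exists_atom_le (a ⊓ bᶜ) with h0 | ⟨e, he, hle⟩
  · exact (disjoint_compl_right_iff).mp (disjoint_iff.mpr h0)
  · exact absurd (h e he (hle.trans inf_le_left)) ((atom_not_le he).mpr (hle.trans inf_le_right))

lemma eq_of_atoms {B : Type*} [BooleanAlgebra B] [Fintype B] {a b : B}
    (h : ∀ e : B, IsAtom e → (e ≤ a ↔ e ≤ b)) : a = b :=
  le_antisymm (le_of_atoms fun e he => (h e he).1) (le_of_atoms fun e he => (h e he).2)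

/-- A function whose graph validates the axioms and contains `X` refutes `X ⊢ ∅`. -/
lemma not_entails {L B : Type*} [DistribLattice L] [BoundedOrder L] [BooleanAlgebra B]
    [Fintype B] [DecidableEq L] [DecidableEq B] (X : Finset (L × B)) (φ : L → B)
    (hinf : ∀ x y, φ (x ⊓ y) = φ x ⊓ φ y) (hsup : ∀ x y, φ (x ⊔ y) = φ x ⊔ φ y)
    (hbot : φ ⊥ = ⊥) (htop : φ ⊤ = ⊤) (hX : ∀ p ∈ X, φ p.1 = p.2) :
    ¬ LatticeEntails L B X ∅ := by
  intro h
  have := h (fun X Y => (∀ p ∈ X, φ p.1 = p.2) → ∃ p ∈ Y, φ p.1 = p.2) ?_ ?_ hX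
  · simp at this
  · refine ⟨?_, ?_, ?_⟩
    · rintro X Y ⟨x, hx, hy⟩ h
      exact ⟨x, hy, h x hx⟩
    · intro X X' Y Y' h h'
      obtain ⟨p, hp, hp'⟩ := h fun p hp => h' p (Finset.mem_union_left _ hp)
      exact ⟨p, Finset.mem_union_left _ hp, hp'⟩
    · intro X Y z h1 h2 h
      obtain ⟨p, hp, hp'⟩ := h1 h
      rcases Finset.mem_insert.mp hp with rfl | hp
      · refine h2 fun q hq => ?_
        rcases Finset.mem_insert.mp hq with rfl | hq
        · exact hp'
        · exact h q hq
      · exact ⟨p, hp, hp'⟩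
  · rintro X Y (⟨x, a, b, hab, rfl, rfl⟩ | ⟨x, y, a, b, rfl, rfl⟩ | ⟨x, y, a, b, rfl, rfl⟩ |
      ⟨rfl, rfl⟩ | ⟨rfl, rfl⟩ | ⟨x, rfl, rfl⟩) h
    · have h1 := h (x, a) (by simp)
      have h2 := h (x, b) (by simp)
      exact absurd (h1.symm.trans h2) hab
    · have h1 := h (x, a) (by simp)
      have h2 := h (y, b) (by simp)
      simp_all
    · have h1 := h (x, a) (by simp)
      have h2 := h (y, b) (by simp)
      simp_all
    · simp [hbot]
    · simp [htop]
    · exact ⟨(x, φ x), by simp, rfl⟩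

lemma multi_cut {S : Type*} [DecidableEq S] {E : Finset S → Finset S → Prop}
    (hE : IsEntailment E) (F Y : Finset S) (hY : ∀ y ∈ Y, E (insert y F) ∅) (h : E F Y) :
    E F ∅ := by
  induction Y using Finset.induction_on with
  | empty => exact h
  | insert y Y _ ih =>
    refine ih (fun z hz => hY z (Finset.mem_insert_of_mem hz)) (hE.2.2 F Y y h ?_)
    simpa using hE.2.1 _ ∅ _ Y (hY y (Finset.mem_insert_self _ _))

lemma mono_left {S : Type*} [DecidableEq S] {E : Finset S → Finset S → Prop}
    (hE : IsEntailment E) {F G Y : Finset S} (hFG : F ⊆ G) (h : E F Y) : E G Y := by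
  have := hE.2.1 F G Y ∅ h
  rwa [Finset.union_eq_right.mpr hFG, Finset.union_empty] at this

/-- Completeness: a consistent finite set extends to a model. -/
lemma exists_model {S : Type*} [DecidableEq S] {E : Finset S → Finset S → Prop}
    (hE : IsEntailment E) (X : Finset S) (hX : ¬ E X ∅) :
    ∃ T : Set S, (X : Set S) ⊆ T ∧
      ∀ A Y : Finset S, E A Y → (A : Set S) ⊆ T → ∃ y ∈ Y, y ∈ T := by
  obtain ⟨T, hXT, hT⟩ := zorn_subset_nonempty
    {T : Set S | ∀ F : Finset S, (F : Set S) ⊆ T → ¬ E F ∅} (by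
      intro c hc hchain hne
      refine ⟨⋃₀ c, ?_, fun s hs => Set.subset_sUnion_of_mem hs⟩
      intro F hF
      obtain ⟨t, ht, hFt⟩ := hchain.directedOn.exists_mem_subset_of_finset_subset_biUnion
        (f := id) hne (s := F) (by simpa [Set.sUnion_eq_biUnion] using hF)
      exact hc ht F hFt) (X : Set S)
    (fun F hF h => hX (mono_left hE (by exact_mod_cast hF) h))
  refine ⟨T, hXT, fun A Y hAY hA => ?_⟩
  by_contra hno
  push Not at hno
  have key : ∀ y : S, ∃ F : Finset S, (F : Set S) ⊆ T ∧ (y ∈ Y → E (insert y F) ∅) := by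
    intro y
    by_cases hy : y ∈ Y
    swap
    · exact ⟨∅, by simp, fun h => absurd h hy⟩
    have hn : ¬ (∀ F : Finset S, (F : Set S) ⊆ insert y T → ¬ E F ∅) := by
      intro hmem
      exact hno y hy (hT.2 hmem (Set.subset_insert y T) (Set.mem_insert y T))
    push Not at hn
    obtain ⟨F, hF, hFE⟩ := hn
    refine ⟨F.erase y, ?_, fun _ => mono_left hE (fun z hz => ?_) hFE⟩
    · intro z hz
      have hz' := Finset.mem_erase.mp (Finset.mem_coe.mp hz)
      exact (hF hz'.2).resolve_left hz'.1
    · by_cases hzy : z = y <;> simp [hzy, hz]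
  choose G hGT hG using key
  have hsub : ((A ∪ Y.biUnion G : Finset S) : Set S) ⊆ T := by
    intro z hz
    rcases Finset.mem_union.mp (Finset.mem_coe.mp hz) with h | h
    · exact hA h
    · obtain ⟨y, _, hy⟩ := Finset.mem_biUnion.mp h
      exact hGT y hy
  refine hT.1 _ hsub (multi_cut hE _ Y (fun y hy => ?_) (mono_left hE Finset.subset_union_left hAY))
  exact mono_left hE (Finset.insert_subset_insert _
    ((Finset.subset_biUnion_of_mem G hy).trans Finset.subset_union_right)) (hG y hy)

end Stmt7Aux

open Stmt7Aux

theorem stmt7 {L B : Type*} [DistribLattice L] [BoundedOrder L] [BooleanAlgebra B]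
    [Fintype B] [DecidableEq L] [DecidableEq B] [DecidableRel ((· ≤ ·) : B → B → Prop)]
    (X : Finset (L × B)) :
    LatticeEntails L B X ∅ ↔
      ∃ e : B, IsAtom e ∧ atomMeet e X ≤ atomJoin e X := by
  constructor
  · intro h
    by_contra hno
    push Not at hno
    have key : ∀ e : B, ∃ J : Order.Ideal L, IsAtom e →
        J.IsPrime ∧ atomMeet e X ∉ J ∧ atomJoin e X ∈ J := by
      intro e
      by_cases he : IsAtom e
      swap
      · exact ⟨Order.Ideal.principal ⊥, fun h => absurd h he⟩
      obtain ⟨J, hJ, hIJ, hd⟩ := DistribLattice.prime_ideal_of_disjoint_filter_ideal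
        (F := Order.PFilter.principal (atomMeet e X))
        (I := Order.Ideal.principal (atomJoin e X)) (by
          rw [Set.disjoint_left]
          intro x hx hx'
          exact hno e he (le_trans (Order.PFilter.mem_principal.mp hx)
            (Order.Ideal.mem_principal.mp hx')))
      refine ⟨J, fun _ => ⟨hJ, fun hm => ?_, hIJ (Order.Ideal.mem_principal.mpr le_rfl)⟩⟩
      exact Set.disjoint_left.mp hd (Order.PFilter.mem_principal.mpr le_rfl) hm
    choose J hJ using key
    classical
    let φ : L → B := fun x => (Finset.univ.filter fun e : B => IsAtom e ∧ x ∉ J e).sup id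
    have hφ : ∀ (e : B), IsAtom e → ∀ x, e ≤ φ x ↔ x ∉ J e := by
      intro e he x
      constructor
      · intro hle hx
        refine (atom_not_le he).mpr ?_ hle
        rw [le_compl_comm]
        refine Finset.sup_le fun f hf => ?_
        obtain ⟨hf, hfx⟩ := (Finset.mem_filter.mp hf).2
        refine (atom_not_le hf).mp fun hfe => ?_
        rcases he.le_iff.mp hfe with h0 | h0
        · exact hf.1 h0
        · exact hfx (by rw [show f = e from h0]; exact hx)
      · intro hx
        exact Finset.le_sup (f := id) (by simp [he, hx])
    refine not_entails X φ ?_ ?_ ?_ ?_ ?_ h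
    · intro x y
      refine eq_of_atoms fun e he => ?_
      rw [le_inf_iff, hφ e he, hφ e he, hφ e he]
      have := (hJ e he).1
      constructor
      · exact fun hxy => ⟨fun hx => hxy ((J e).lower inf_le_left hx),
          fun hy => hxy ((J e).lower inf_le_right hy)⟩
      · rintro ⟨h1, h2⟩ h3
        exact (this.mem_or_mem h3).elim h1 h2
    · intro x y
      refine eq_of_atoms fun e he => ?_
      rw [atom_le_sup he, hφ e he, hφ e he, hφ e he, Order.Ideal.sup_mem_iff]
      tauto
    · refine eq_of_atoms fun e he => ?_
      rw [hφ e he]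
      simp [he.1]
    · refine eq_of_atoms fun e he => ?_
      rw [hφ e he]
      simp only [le_top, iff_true]
      exact fun ht => (hJ e he).2.1 ((J e).lower le_top ht)
    · rintro ⟨x, a⟩ hp
      refine eq_of_atoms fun e he => ?_
      rw [hφ e he]
      constructor
      · intro hx
        by_contra hea
        have := (atom_not_le he).mp hea
        exact hx ((J e).lower (Finset.le_sup (f := Prod.fst) (b := (x, a))
          (Finset.mem_filter.mpr ⟨hp, this⟩)) (hJ e he).2.2)
      · intro hea hx
        exact (hJ e he).2.1 ((J e).lower (Finset.inf_le (f := Prod.fst) (b := (x, a))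
          (Finset.mem_filter.mpr ⟨hp, hea⟩)) hx)
  · rintro ⟨e, he, hle⟩ E hE hax
    by_contra hX
    obtain ⟨T, hXT, hT⟩ := exists_model hE X hX
    have hfun : ∀ x, ∃ a, (x, a) ∈ T := by
      intro x
      obtain ⟨y, hy, hyT⟩ := hT ∅ _ (hax _ _ (Or.inr <| Or.inr <| Or.inr <| Or.inr <| Or.inr
        ⟨x, rfl, rfl⟩)) (by simp)
      obtain ⟨a, _, rfl⟩ := Finset.mem_image.mp hy
      exact ⟨a, hyT⟩
    choose φ hφ using hfun
    have huniq : ∀ x a, (x, a) ∈ T → φ x = a := by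
      intro x a ha
      by_contra hne
      obtain ⟨y, hy, -⟩ := hT _ _ (hax _ _ (Or.inl ⟨x, φ x, a, hne, rfl, rfl⟩))
        (by intro z hz; simp at hz; rcases hz with rfl | rfl; exacts [hφ x, ha])
      simp at hy
    have hinf : ∀ x y, φ (x ⊓ y) = φ x ⊓ φ y := by
      intro x y
      obtain ⟨z, hz, hzT⟩ := hT _ _ (hax _ _ (Or.inr <| Or.inl ⟨x, y, φ x, φ y, rfl, rfl⟩))
        (by intro z hz; simp at hz; rcases hz with rfl | rfl; exacts [hφ x, hφ y])
      rw [Finset.mem_singleton] at hz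
      exact huniq _ _ (hz ▸ hzT)
    have hsup : ∀ x y, φ (x ⊔ y) = φ x ⊔ φ y := by
      intro x y
      obtain ⟨z, hz, hzT⟩ := hT _ _ (hax _ _ (Or.inr <| Or.inr <| Or.inl
        ⟨x, y, φ x, φ y, rfl, rfl⟩))
        (by intro z hz; simp at hz; rcases hz with rfl | rfl; exacts [hφ x, hφ y])
      rw [Finset.mem_singleton] at hz
      exact huniq _ _ (hz ▸ hzT)
    have hbot : φ ⊥ = ⊥ := by
      obtain ⟨z, hz, hzT⟩ := hT _ _ (hax _ _ (Or.inr <| Or.inr <| Or.inr <| Or.inl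
        ⟨rfl, rfl⟩)) (by simp)
      rw [Finset.mem_singleton] at hz
      exact huniq _ _ (hz ▸ hzT)
    have htop : φ ⊤ = ⊤ := by
      obtain ⟨z, hz, hzT⟩ := hT _ _ (hax _ _ (Or.inr <| Or.inr <| Or.inr <| Or.inr <| Or.inl
        ⟨rfl, rfl⟩)) (by simp)
      rw [Finset.mem_singleton] at hz
      exact huniq _ _ (hz ▸ hzT)
    have hXφ : ∀ p ∈ X, φ p.1 = p.2 := fun p hp => huniq _ _ (hXT hp)
    have h1 : e ≤ φ (atomMeet e X) := by
      unfold atomMeet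
      refine Finset.inf_induction (p := fun x => e ≤ φ x) (by rw [htop]; exact le_top) ?_ ?_
      · intro x hx y hy
        rw [hinf]
        exact le_inf hx hy
      · intro p hp
        rw [Finset.mem_filter] at hp
        rw [hXφ p hp.1]
        exact hp.2
    have h2 : ¬ e ≤ φ (atomJoin e X) := by
      unfold atomJoin
      refine Finset.sup_induction (p := fun x => ¬ e ≤ φ x)
        (by rw [hbot, le_bot_iff]; exact he.1) ?_ ?_
      · intro x hx y hy
        rw [hsup, atom_le_sup he]
        exact not_or.mpr ⟨hx, hy⟩
      · intro p hp
        rw [Finset.mem_filter] at hp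
        rw [hXφ p hp.1]
        exact (atom_not_le he).mpr hp.2
    apply h2
    have h3 := hinf (atomMeet e X) (atomJoin e X)
    rw [inf_eq_left.mpr hle] at h3
    exact h1.trans (h3.le.trans inf_le_right)
end

section
/- (Formal Nullstellensatz.) For every finite subset X of L × B and all pairs (y₁,b₁),…,(y_k,b_k) ∈ L × B, the following are equivalent: (1) X ⊢ {(y₁,b₁),…,(y_k,b_k)}; (2) for all b₁',…,b_k' ∈ B with b₁' ≠ b₁,…,b_k' ≠ b_k, there exists an atom e of B such that ⋀_{a ≥ e} ⋀ (X ∪ {(y₁,b₁'),…,(y_k,b_k')})_a ≤ ⋁_{a ≥ e} ⋁ (X ∪ {(y₁,b₁'),…,(y_k,b_k')})_{-a} holds in L. -/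
variable (M : Type*) (D : Type*) [Lattice M] [BoundedOrder M] [Lattice D] [BoundedOrder D]
  [Fintype D] [DecidableEq M] [DecidableEq D]

/-- A function preserving the bounded lattice structure. -/
def NSHom {L B : Type*} [Lattice L] [BoundedOrder L] [Lattice B] [BoundedOrder B]
    (f : L → B) : Prop :=
  (∀ x y, f (x ⊓ y) = f x ⊓ f y) ∧ (∀ x y, f (x ⊔ y) = f x ⊔ f y) ∧ f ⊥ = ⊥ ∧ f ⊤ = ⊤

theorem ns_isEntailment (M D : Type*) [Lattice M] [BoundedOrder M] [Lattice D] [BoundedOrder D]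
    [Fintype D] [DecidableEq M] [DecidableEq D] : IsEntailment (LatticeEntails M D) := by
  refine ⟨?_, ?_, ?_⟩
  · intro X Y h E hE _
    exact hE.1 X Y h
  · intro X X' Y Y' h E hE hA
    exact hE.2.1 X X' Y Y' (h E hE hA)
  · intro X Y z h1 h2 E hE hA
    exact hE.2.2 X Y z (h1 E hE hA) (h2 E hE hA)

theorem ns_mono {S : Type*} [DecidableEq S] {E : Finset S → Finset S → Prop}
    (hE : IsEntailment E) {X X' Y Y' : Finset S} (hX : X ⊆ X') (hY : Y ⊆ Y') (h : E X Y) :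
    E X' Y' := by
  have := hE.2.1 X X' Y Y' h
  rwa [Finset.union_eq_right.2 hX, Finset.union_eq_right.2 hY] at this

theorem ns_cut {S : Type*} [DecidableEq S] {E : Finset S → Finset S → Prop}
    (hE : IsEntailment E) (A Y C : Finset S) :
    E A (C ∪ Y) → (∀ c ∈ C, E (insert c A) Y) → E A Y := by
  induction C using Finset.induction_on with
  | empty => intro h _; simpa using h
  | insert c C hc ih =>
    intro h h2
    refine ih ?_ (fun d hd => h2 d (Finset.mem_insert_of_mem hd))
    refine hE.2.2 A (C ∪ Y) c (by rwa [← Finset.insert_union]) ?_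
    exact ns_mono hE (Finset.Subset.refl _) Finset.subset_union_right
      (h2 c (Finset.mem_insert_self _ _))

/-- Completeness: a non-entailment is witnessed by a set closed under `E`. -/
theorem ns_complete {S : Type*} [DecidableEq S] {E : Finset S → Finset S → Prop}
    (hE : IsEntailment E) (X Y : Finset S) (h : ¬ E X Y) :
    ∃ m : Set S, (X : Set S) ⊆ m ∧ (∀ y ∈ Y, y ∉ m) ∧
      ∀ A C : Finset S, E A C → (A : Set S) ⊆ m → ∃ c ∈ C, c ∈ m := by
  obtain ⟨m, hXm, hm⟩ := zorn_subset_nonempty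
    {m : Set S | ∀ A : Finset S, (A : Set S) ⊆ m → ¬ E A Y} (by
      intro c hc hchain hne
      refine ⟨⋃₀ c, ?_, fun s hs => Set.subset_sUnion_of_mem hs⟩
      intro A hA
      obtain ⟨s, hs, hAs⟩ := hchain.directedOn.exists_mem_subset_of_finite_of_subset_sUnion
        hne A.finite_toSet hA
      exact hc hs A hAs) (X : Set S) (by
      intro A hA hAY
      exact h (ns_mono hE (by exact_mod_cast hA) (Finset.Subset.refl _) hAY))
  have hmS := hm.prop
  refine ⟨m, hXm, ?_, ?_⟩
  · intro y hy hym
    exact hmS {y} (by simpa using hym) (hE.1 _ _ ⟨y, by simp, hy⟩)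
  · intro A C hAC hAm
    by_contra hcon
    push Not at hcon
    have key : ∀ c, c ∉ m → ∃ F : Finset S, (F : Set S) ⊆ m ∧ E (insert c F) Y := by
      intro c hcm
      have hnot : ¬ ∀ A : Finset S, (A : Set S) ⊆ insert c m → ¬ E A Y := by
        intro hall
        exact hcm (hm.le_of_ge (y := insert c m) hall (Set.subset_insert c m)
          (Set.mem_insert c m))
      push Not at hnot
      obtain ⟨G, hG, hGY⟩ := hnot
      refine ⟨G.erase c, ?_, ?_⟩
      · intro z hz
        simp only [Finset.coe_erase, Set.mem_sdiff, Finset.mem_coe, Set.mem_singleton_iff] at hz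
        exact (hG hz.1).resolve_left hz.2
      · exact ns_mono hE (by intro z hz; by_cases hzc : z = c <;> simp [hzc, hz])
          (Finset.Subset.refl _) hGY
    have key' : ∀ c, ∃ F : Finset S, (F : Set S) ⊆ m ∧ (c ∉ m → E (insert c F) Y) := by
      intro c
      by_cases hc : c ∈ m
      · exact ⟨∅, by simp, fun h => (h hc).elim⟩
      · obtain ⟨F, h1, h2⟩ := key c hc
        exact ⟨F, h1, fun _ => h2⟩
    choose F hF1 hF2 using key'
    refine hmS (A ∪ C.biUnion F) ?_ (ns_cut hE _ Y C ?_ ?_)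
    · intro z hz
      simp only [Finset.coe_union, Set.mem_union, Finset.mem_coe, Finset.mem_biUnion] at hz
      rcases hz with hz | ⟨c, _, hz⟩
      · exact hAm hz
      · exact hF1 c hz
    · exact ns_mono hE Finset.subset_union_left Finset.subset_union_left hAC
    · intro c hc
      refine ns_mono hE ?_ (Finset.Subset.refl _) (hF2 c (hcon c hc))
      refine Finset.insert_subset_insert c ?_
      exact (Finset.subset_biUnion_of_mem F hc).trans Finset.subset_union_right

theorem ns_sound {M D : Type*} [Lattice M] [BoundedOrder M] [Lattice D] [BoundedOrder D]
    [Fintype D] [DecidableEq M] [DecidableEq D] (f : M → D) (hf : NSHom f)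
    {X Y : Finset (M × D)} (h : LatticeEntails M D X Y) (hX : ∀ p ∈ X, f p.1 = p.2) :
    ∃ p ∈ Y, f p.1 = p.2 := by
  obtain ⟨hi, hs, h0, h1⟩ := hf
  refine h (fun X Y => (∀ p ∈ X, f p.1 = p.2) → ∃ p ∈ Y, f p.1 = p.2) ⟨?_, ?_, ?_⟩ ?_ hX
  · rintro X Y ⟨x, hx, hy⟩ hX
    exact ⟨x, hy, hX x hx⟩
  · intro X X' Y Y' h hX
    obtain ⟨p, hp, hfp⟩ := h (fun p hp => hX p (Finset.mem_union_left _ hp))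
    exact ⟨p, Finset.mem_union_left _ hp, hfp⟩
  · intro X Y z h1 h2 hX
    obtain ⟨p, hp, hfp⟩ := h1 hX
    rcases Finset.mem_insert.1 hp with rfl | hp
    · refine h2 (fun q hq => ?_)
      rcases Finset.mem_insert.1 hq with rfl | hq
      · exact hfp
      · exact hX q hq
    · exact ⟨p, hp, hfp⟩
  · rintro X' Y' (⟨x, a, b, hab, rfl, rfl⟩ | ⟨x, y, a, b, rfl, rfl⟩ | ⟨x, y, a, b, rfl, rfl⟩ |
      ⟨rfl, rfl⟩ | ⟨rfl, rfl⟩ | ⟨x, rfl, rfl⟩) hX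
    · have e1 := hX (x, a) (by simp)
      have e2 := hX (x, b) (by simp)
      exact (hab (e1.symm.trans e2)).elim
    · have e1 := hX (x, a) (by simp)
      have e2 := hX (y, b) (by simp)
      exact ⟨_, Finset.mem_singleton_self _, by simp_all⟩
    · have e1 := hX (x, a) (by simp)
      have e2 := hX (y, b) (by simp)
      exact ⟨_, Finset.mem_singleton_self _, by simp_all⟩
    · exact ⟨_, Finset.mem_singleton_self _, h0⟩
    · exact ⟨_, Finset.mem_singleton_self _, h1⟩
    · exact ⟨(x, f x), by simp, rfl⟩

theorem ns_model {M D : Type*} [Lattice M] [BoundedOrder M] [Lattice D] [BoundedOrder D]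
    [Fintype D] [DecidableEq M] [DecidableEq D]
    {X Y : Finset (M × D)} (h : ¬ LatticeEntails M D X Y) :
    ∃ f : M → D, NSHom f ∧ (∀ p ∈ X, f p.1 = p.2) ∧ ∀ p ∈ Y, f p.1 ≠ p.2 := by
  obtain ⟨m, hXm, hYm, hcl⟩ := ns_complete (ns_isEntailment M D) X Y h
  have hax : ∀ A C : Finset (M × D), LatticeAxioms M D A C → (A : Set (M × D)) ⊆ m →
      ∃ c ∈ C, c ∈ m := fun A C hA => hcl A C (fun E _ hE => hE _ _ hA)
  have htot : ∀ x, ∃ a, (x, a) ∈ m := by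
    intro x
    obtain ⟨c, hc, hcm⟩ := hax ∅ _ (Or.inr (Or.inr (Or.inr (Or.inr (Or.inr ⟨x, rfl, rfl⟩)))))
      (by simp)
    obtain ⟨a, _, rfl⟩ := Finset.mem_image.1 hc
    exact ⟨a, hcm⟩
  choose f hf using htot
  have huniq : ∀ x a, (x, a) ∈ m → f x = a := by
    intro x a hxa
    by_contra hne
    obtain ⟨c, hc, _⟩ := hax _ _ (Or.inl ⟨x, f x, a, hne, rfl, rfl⟩)
      (by simp [Set.insert_subset_iff, hf, hxa])
    simp at hc
  refine ⟨f, ⟨?_, ?_, ?_, ?_⟩, ?_, ?_⟩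
  · intro x y
    obtain ⟨c, hc, hcm⟩ := hax _ _ (Or.inr (Or.inl ⟨x, y, f x, f y, rfl, rfl⟩))
      (by simp [Set.insert_subset_iff, hf])
    obtain rfl := Finset.mem_singleton.1 hc
    exact huniq _ _ hcm
  · intro x y
    obtain ⟨c, hc, hcm⟩ := hax _ _ (Or.inr (Or.inr (Or.inl ⟨x, y, f x, f y, rfl, rfl⟩)))
      (by simp [Set.insert_subset_iff, hf])
    obtain rfl := Finset.mem_singleton.1 hc
    exact huniq _ _ hcm
  · obtain ⟨c, hc, hcm⟩ := hax _ _ (Or.inr (Or.inr (Or.inr (Or.inl ⟨rfl, rfl⟩)))) (by simp)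
    obtain rfl := Finset.mem_singleton.1 hc
    exact huniq _ _ hcm
  · obtain ⟨c, hc, hcm⟩ := hax _ _ (Or.inr (Or.inr (Or.inr (Or.inr (Or.inl ⟨rfl, rfl⟩)))))
      (by simp)
    obtain rfl := Finset.mem_singleton.1 hc
    exact huniq _ _ hcm
  · intro p hp
    exact huniq _ _ (hXm hp)
  · intro p hp he
    refine hYm p hp ?_
    have := hf p.1
    rwa [he] at this

theorem ns_atom_sup {B : Type*} [BooleanAlgebra B] {e a b : B} (he : IsAtom e) :
    e ≤ a ⊔ b ↔ e ≤ a ∨ e ≤ b := by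
  constructor
  · intro h
    by_contra hcon
    push Not at hcon
    have h1 := he.not_le_iff_disjoint.1 hcon.1
    have h2 := he.not_le_iff_disjoint.1 hcon.2
    exact he.1 ((h1.sup_right h2).eq_bot_of_le h)
  · rintro (h | h)
    · exact h.trans le_sup_left
    · exact h.trans le_sup_right

theorem ns_atom_compl {B : Type*} [BooleanAlgebra B] {e a : B} (he : IsAtom e) :
    e ≤ aᶜ ↔ ¬ e ≤ a := by
  rw [le_compl_iff_disjoint_right]
  exact he.not_le_iff_disjoint.symm

/-- Glue a family of prime ideals indexed by atoms into a homomorphism. -/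
theorem ns_glue {L B : Type*} [DistribLattice L] [BoundedOrder L] [BooleanAlgebra B]
    [Fintype B] [DecidableEq B] [DecidableRel ((· ≤ ·) : B → B → Prop)]
    (Z : Finset (L × B)) (h : ∀ e : B, IsAtom e → ¬ atomMeet e Z ≤ atomJoin e Z) :
    ∃ f : L → B, NSHom f ∧ ∀ p ∈ Z, f p.1 = p.2 := by
  classical
  have hJ : ∀ e : B, ∃ J : Order.Ideal L, IsAtom e →
      (J.IsPrime ∧ atomJoin e Z ∈ J ∧ atomMeet e Z ∉ J) := by
    intro e
    by_cases he : IsAtom e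
    · obtain ⟨J, hJ, hIJ, hd⟩ := DistribLattice.prime_ideal_of_disjoint_filter_ideal
        (F := Order.PFilter.principal (atomMeet e Z))
        (I := Order.Ideal.principal (atomJoin e Z)) (by
          rw [Set.disjoint_left]
          intro x hx hx'
          have hx1 : atomMeet e Z ≤ x := Order.PFilter.mem_principal.1 hx
          have hx2 : x ≤ atomJoin e Z := Order.Ideal.mem_principal.1 hx'
          exact h e he (hx1.trans hx2))
      refine ⟨J, fun _ => ⟨hJ, hIJ (Order.Ideal.mem_principal.2 le_rfl), fun hm => ?_⟩⟩
      exact Set.disjoint_left.1 hd (Order.PFilter.mem_principal.2 le_rfl) hm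
    · exact ⟨Order.Ideal.principal ⊥, fun h => (he h).elim⟩
  choose J hJ using hJ
  let f : L → B := fun x => (Finset.univ.filter fun e : B => IsAtom e ∧ x ∉ J e).sup id
  have hf : ∀ e, IsAtom e → ∀ x, e ≤ f x ↔ x ∉ J e := by
    intro e he x
    constructor
    · intro hle
      by_contra hx
      have hdis : Disjoint e (f x) := by
        rw [Finset.disjoint_sup_right]
        intro d hd
        obtain ⟨hda, hdx⟩ := (Finset.mem_filter.1 hd).2
        refine he.disjoint_of_ne hda ?_
        rintro rfl
        exact hdx hx
      exact he.1 (hdis.eq_bot_of_le hle)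
    · intro hx
      exact Finset.le_sup (f := id) (Finset.mem_filter.2 ⟨Finset.mem_univ e, he, hx⟩)
  refine ⟨f, ⟨?_, ?_, ?_, ?_⟩, ?_⟩
  · intro x y
    refine BooleanAlgebra.eq_iff_atom_le_iff.2 fun e he => ?_
    rw [le_inf_iff, hf e he, hf e he, hf e he, ← not_or, not_iff_not]
    refine ⟨(hJ e he).1.mem_or_mem, ?_⟩
    rintro (h | h)
    · exact (J e).lower inf_le_left h
    · exact (J e).lower inf_le_right h
  · intro x y
    refine BooleanAlgebra.eq_iff_atom_le_iff.2 fun e he => ?_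
    rw [ns_atom_sup he, hf e he, hf e he, hf e he, ← not_and_or, not_iff_not]
    exact Order.Ideal.sup_mem_iff
  · refine BooleanAlgebra.eq_iff_atom_le_iff.2 fun e he => ?_
    rw [hf e he]
    have := he.1
    simp [this]
  · refine BooleanAlgebra.eq_iff_atom_le_iff.2 fun e he => ?_
    rw [hf e he]
    simp only [le_top, iff_true]
    exact fun ht => (hJ e he).2.2 ((J e).lower le_top ht)
  · intro p hp
    refine BooleanAlgebra.eq_iff_atom_le_iff.2 fun e he => ?_
    rw [hf e he]
    constructor
    · intro hn
      by_contra hle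
      refine hn ((J e).lower ?_ (hJ e he).2.1)
      exact Finset.le_sup (f := Prod.fst)
        (Finset.mem_filter.2 ⟨hp, (ns_atom_compl he).2 hle⟩)
    · intro hle hm
      refine (hJ e he).2.2 ((J e).lower ?_ hm)
      exact Finset.inf_le (f := Prod.fst) (Finset.mem_filter.2 ⟨hp, hle⟩)

theorem ns_unglue {L B : Type*} [DistribLattice L] [BoundedOrder L] [BooleanAlgebra B]
    [DecidableRel ((· ≤ ·) : B → B → Prop)]
    (Z : Finset (L × B)) (f : L → B) (hf : NSHom f) (hZ : ∀ p ∈ Z, f p.1 = p.2)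
    (e : B) (he : IsAtom e) : ¬ atomMeet e Z ≤ atomJoin e Z := by
  obtain ⟨hi, hs, h0, h1⟩ := hf
  intro hle
  have hmono : f (atomMeet e Z) ≤ f (atomJoin e Z) := by
    have := hi (atomMeet e Z) (atomJoin e Z)
    rw [inf_eq_left.2 hle] at this
    exact inf_eq_left.1 this.symm
  have hm : e ≤ f (atomMeet e Z) := by
    unfold atomMeet
    refine Finset.inf_induction (p := fun x => e ≤ f x) (by rw [h1]; exact le_top)
      (fun a ha b hb => by rw [hi]; exact le_inf ha hb) ?_
    intro p hp
    rw [Finset.mem_filter] at hp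
    rw [hZ p hp.1]
    exact hp.2
  have hj : f (atomJoin e Z) ≤ eᶜ := by
    unfold atomJoin
    refine Finset.sup_induction (p := fun x => f x ≤ eᶜ) (by rw [h0]; exact bot_le)
      (fun a ha b hb => by rw [hs]; exact sup_le ha hb) ?_
    intro p hp
    rw [Finset.mem_filter] at hp
    rw [hZ p hp.1]
    exact le_compl_comm.1 hp.2
  exact (ns_atom_compl he).1 ((hm.trans hmono).trans hj) le_rfl

theorem stmt8 {L B : Type*} [DistribLattice L] [BoundedOrder L] [BooleanAlgebra B]
    [Fintype B] [DecidableEq L] [DecidableEq B] [DecidableRel ((· ≤ ·) : B → B → Prop)]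
    (X : Finset (L × B)) (k : ℕ) (y : Fin k → L) (b : Fin k → B) :
    LatticeEntails L B X (Finset.univ.image fun i => (y i, b i)) ↔
      ∀ b' : Fin k → B, (∀ i, b' i ≠ b i) →
        ∃ e : B, IsAtom e ∧
          atomMeet e (X ∪ Finset.univ.image fun i => (y i, b' i)) ≤
          atomJoin e (X ∪ Finset.univ.image fun i => (y i, b' i)) := by

  constructor
  · intro h b' hb'
    by_contra hcon
    push Not at hcon
    obtain ⟨f, hf, hfZ⟩ := ns_glue (X ∪ Finset.univ.image fun i => (y i, b' i))
      (fun e he => hcon e he)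
    obtain ⟨p, hp, hfp⟩ := ns_sound f hf h (fun p hp => hfZ p (Finset.mem_union_left _ hp))
    obtain ⟨i, _, rfl⟩ := Finset.mem_image.1 hp
    have h2 := hfZ (y i, b' i)
      (Finset.mem_union_right _ (Finset.mem_image.2 ⟨i, Finset.mem_univ i, rfl⟩))
    exact hb' i (h2.symm.trans hfp)
  · intro h
    by_contra hcon
    obtain ⟨f, hf, hfX, hfY⟩ := ns_model hcon
    obtain ⟨e, he, hle⟩ := h (fun i => f (y i)) (fun i =>
      hfY (y i, b i) (Finset.mem_image.2 ⟨i, Finset.mem_univ i, rfl⟩))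
    refine ns_unglue _ f hf ?_ e he hle
    intro p hp
    rcases Finset.mem_union.1 hp with hp | hp
    · exact hfX p hp
    · obtain ⟨i, _, rfl⟩ := Finset.mem_image.1 hp
      rfl
end

section
/- The following are equivalent: (1) ∅ ⊢ ∅, i.e. the entailment relation ⊢ is trivial; (2) 1 = 0 in L. -/
variable (M : Type*) (D : Type*) [Lattice M] [BoundedOrder M] [Lattice D] [BoundedOrder D]
  [Fintype D] [DecidableEq M] [DecidableEq D]

theorem stmt9 {L B : Type*} [DistribLattice L] [BoundedOrder L] [BooleanAlgebra B]
    [Fintype B] [Nontrivial B] [DecidableEq L] [DecidableEq B] :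
    LatticeEntails L B ∅ ∅ ↔ (⊤ : L) = ⊥ := by
  classical
  constructor
  · intro h
    by_contra hne
    have hd : Disjoint ((Order.PFilter.principal (⊤ : L) : Order.PFilter L) : Set L)
        ((Order.Ideal.principal (⊥ : L) : Order.Ideal L) : Set L) := by
      rw [Set.disjoint_left]
      intro x hx hx'
      have h1 : (⊤ : L) ≤ x := hx
      have h2 : x ≤ (⊥ : L) := hx'
      exact hne (le_antisymm (h1.trans h2) bot_le)
    obtain ⟨J, hJ, -, hJF⟩ := DistribLattice.prime_ideal_of_disjoint_filter_ideal hd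
    have htop : (⊤ : L) ∉ J := fun ht =>
      Set.disjoint_left.mp hJF (show (⊤ : L) ≤ ⊤ from le_rfl) ht
    have hbot : (⊥ : L) ∈ J := J.bot_mem
    let f : L → B := fun x => if x ∈ J then ⊥ else ⊤
    have hinf : ∀ x y, f (x ⊓ y) = f x ⊓ f y := by
      intro x y
      have : x ⊓ y ∈ J ↔ x ∈ J ∨ y ∈ J :=
        ⟨fun h => hJ.mem_or_mem h, fun h => h.elim (J.lower inf_le_left) (J.lower inf_le_right)⟩
      by_cases hx : x ∈ J <;> by_cases hy : y ∈ J <;> simp [f, this, hx, hy]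
    have hsup : ∀ x y, f (x ⊔ y) = f x ⊔ f y := by
      intro x y
      have : x ⊔ y ∈ J ↔ x ∈ J ∧ y ∈ J := Order.Ideal.sup_mem_iff
      by_cases hx : x ∈ J <;> by_cases hy : y ∈ J <;> simp [f, this, hx, hy]
    have hf0 : f ⊥ = ⊥ := by simp [f]
    have hf1 : f ⊤ = ⊤ := by simp [f, htop]
    have key := h (fun X Y => (∀ p ∈ X, f p.1 = p.2) → ∃ p ∈ Y, f p.1 = p.2) ?_ ?_
    · simp at key
    · refine ⟨?_, ?_, ?_⟩
      · rintro X Y ⟨x, hx, hy⟩ hX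
        exact ⟨x, hy, hX x hx⟩
      · intro X X' Y Y' hXY hX
        obtain ⟨p, hp, hp'⟩ := hXY fun p hp => hX p (Finset.mem_union_left _ hp)
        exact ⟨p, Finset.mem_union_left _ hp, hp'⟩
      · intro X Y z h1 h2 hX
        obtain ⟨p, hp, hp'⟩ := h1 hX
        rcases Finset.mem_insert.mp hp with rfl | hp
        · refine h2 fun q hq => ?_
          rcases Finset.mem_insert.mp hq with rfl | hq
          · exact hp'
          · exact hX q hq
        · exact ⟨p, hp, hp'⟩
    · rintro X Y (⟨x, a, b, hab, rfl, rfl⟩ | ⟨x, y, a, b, rfl, rfl⟩ | ⟨x, y, a, b, rfl, rfl⟩ |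
        ⟨rfl, rfl⟩ | ⟨rfl, rfl⟩ | ⟨x, rfl, rfl⟩) hX
      · exact absurd ((hX (x, a) (by simp)).symm.trans (hX (x, b) (by simp))) hab
      · have h1 : f x = a := hX (x, a) (by simp)
        have h2 : f y = b := hX (y, b) (by simp)
        exact ⟨_, Finset.mem_singleton_self _, by simp only [hinf, h1, h2]⟩
      · have h1 : f x = a := hX (x, a) (by simp)
        have h2 : f y = b := hX (y, b) (by simp)
        exact ⟨_, Finset.mem_singleton_self _, by simp only [hsup, h1, h2]⟩
      · exact ⟨_, Finset.mem_singleton_self _, hf0⟩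
      · exact ⟨_, Finset.mem_singleton_self _, hf1⟩
      · exact ⟨(x, f x), by simp, rfl⟩
  · intro h E hE hA
    obtain ⟨-, hM, hT⟩ := hE
    have h0 : E ∅ {((⊥ : L), (⊥ : B))} := hA _ _ (Or.inr (Or.inr (Or.inr (Or.inl ⟨rfl, rfl⟩))))
    have h1 : E ∅ {((⊥ : L), (⊤ : B))} :=
      hA _ _ (Or.inr (Or.inr (Or.inr (Or.inr (Or.inl ⟨rfl, by rw [h]⟩)))))
    have h2 : E {((⊥ : L), (⊤ : B)), ((⊥ : L), (⊥ : B))} ∅ :=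
      hA _ _ (Or.inl ⟨⊥, ⊤, ⊥, top_ne_bot, rfl, rfl⟩)
    refine hT ∅ ∅ (⊥, ⊥) h0 (hT _ ∅ (⊥, ⊤) ?_ h2)
    have := hM ∅ {((⊥ : L), (⊥ : B))} _ ∅ h1
    simpa using this
end

section
/- For all x, y ∈ L the following are equivalent: (1) x ≤ y in L; (2) {(x, 1_B)} ⊢ {(y, 1_B)}; (3) {(y, 0_B)} ⊢ {(x, 0_B)}. -/
variable (M : Type*) (D : Type*) [Lattice M] [BoundedOrder M] [Lattice D] [BoundedOrder D]
  [Fintype D] [DecidableEq M] [DecidableEq D]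

theorem entail_cut_finset {S : Type*} [DecidableEq S] {E : Finset S → Finset S → Prop}
    (hE : IsEntailment E) (X Y : Finset S) (Z : Finset S) :
    E X (Z ∪ Y) → (∀ z ∈ Z, E (insert z X) Y) → E X Y := by
  obtain ⟨_, hM, hT⟩ := hE
  induction Z using Finset.induction_on with
  | empty => intro h _; simpa using h
  | insert z Z hz ih =>
    intro h hz'
    refine ih ?_ (fun w hw => hz' w (Finset.mem_insert_of_mem hw))
    refine hT _ _ z (by simpa [Finset.insert_union] using h) ?_
    have := hM _ ∅ _ Z (hz' z (Finset.mem_insert_self _ _))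
    simpa [Finset.union_comm] using this

theorem semantic_entail {L B : Type*} [DistribLattice L] [BoundedOrder L] [BooleanAlgebra B]
    [Fintype B] [DecidableEq L] [DecidableEq B] (f : L → B)
    (hinf : ∀ x y, f (x ⊓ y) = f x ⊓ f y) (hsup : ∀ x y, f (x ⊔ y) = f x ⊔ f y)
    (hbot : f ⊥ = ⊥) (htop : f ⊤ = ⊤) (X Y : Finset (L × B)) (h : LatticeEntails L B X Y) :
    (∀ p ∈ X, f p.1 = p.2) → ∃ q ∈ Y, f q.1 = q.2 := by
  refine h (fun X Y => (∀ p ∈ X, f p.1 = p.2) → ∃ q ∈ Y, f q.1 = q.2) ⟨?_, ?_, ?_⟩ ?_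
  · rintro X Y ⟨x, hx, hy⟩ h
    exact ⟨x, hy, h x hx⟩
  · intro X X' Y Y' h h'
    obtain ⟨q, hq, e⟩ := h (fun p hp => h' p (Finset.mem_union_left _ hp))
    exact ⟨q, Finset.mem_union_left _ hq, e⟩
  · intro X Y z h1 h2 h
    obtain ⟨q, hq, e⟩ := h1 h
    rcases Finset.mem_insert.1 hq with rfl | hq
    · refine h2 fun p hp => ?_
      rcases Finset.mem_insert.1 hp with rfl | hp
      · exact e
      · exact h p hp
    · exact ⟨q, hq, e⟩
  · rintro X Y (⟨x, a, b, hab, rfl, rfl⟩ | ⟨x, y, a, b, rfl, rfl⟩ | ⟨x, y, a, b, rfl, rfl⟩ |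
      ⟨rfl, rfl⟩ | ⟨rfl, rfl⟩ | ⟨x, rfl, rfl⟩) h
    · have h1 := h (x, a) (by simp)
      have h2 := h (x, b) (by simp)
      exact absurd (h1.symm.trans h2) hab
    · have h1 := h (x, a) (by simp)
      have h2 := h (y, b) (by simp)
      exact ⟨_, Finset.mem_singleton_self _, by simp_all⟩
    · have h1 := h (x, a) (by simp)
      have h2 := h (y, b) (by simp)
      exact ⟨_, Finset.mem_singleton_self _, by simp_all⟩
    · exact ⟨_, Finset.mem_singleton_self _, hbot⟩
    · exact ⟨_, Finset.mem_singleton_self _, htop⟩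
    · exact ⟨(x, f x), by simp, rfl⟩

theorem exists_sep {L B : Type*} [DistribLattice L] [BoundedOrder L] [BooleanAlgebra B]
    (x y : L) (h : ¬ x ≤ y) : ∃ f : L → B,
    (∀ x y, f (x ⊓ y) = f x ⊓ f y) ∧ (∀ x y, f (x ⊔ y) = f x ⊔ f y) ∧
    f ⊥ = ⊥ ∧ f ⊤ = ⊤ ∧ f x = ⊤ ∧ f y = ⊥ := by
  classical
  have hd : Disjoint (Order.PFilter.principal x : Set L) (Order.Ideal.principal y : Set L) := by
    rw [Set.disjoint_left]
    intro z hz hz'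
    exact h (le_trans (Order.PFilter.mem_principal.1 hz) (Order.Ideal.mem_principal.1 hz'))
  obtain ⟨J, hJ, hyJ, hxJ⟩ := DistribLattice.prime_ideal_of_disjoint_filter_ideal hd
  have hy : y ∈ J := hyJ (Order.Ideal.mem_principal.2 le_rfl)
  have hx : x ∉ J := fun hx => Set.disjoint_left.1 hxJ (Order.PFilter.mem_principal.2 le_rfl) hx
  refine ⟨fun z => if z ∈ J then ⊥ else ⊤, ?_, ?_, ?_, ?_, ?_, ?_⟩
  · intro a b
    have : a ⊓ b ∈ J ↔ a ∈ J ∨ b ∈ J :=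
      ⟨hJ.mem_or_mem, fun h => h.elim (J.lower inf_le_left) (J.lower inf_le_right)⟩
    by_cases ha : a ∈ J <;> by_cases hb : b ∈ J <;> simp [this, ha, hb]
  · intro a b
    have : a ⊔ b ∈ J ↔ a ∈ J ∧ b ∈ J := Order.Ideal.sup_mem_iff
    by_cases ha : a ∈ J <;> by_cases hb : b ∈ J <;> simp [this, ha, hb]
  · simp
  · have : (⊤ : L) ∉ J := fun h => hx (J.lower le_top h)
    simp [this]
  · simp [hx]
  · simp [hy]

theorem stmt10 {L B : Type*} [DistribLattice L] [BoundedOrder L] [BooleanAlgebra B]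
    [Fintype B] [Nontrivial B] [DecidableEq L] [DecidableEq B] (x y : L) :
    (x ≤ y ↔ LatticeEntails L B {(x, (⊤ : B))} {(y, (⊤ : B))}) ∧
    (x ≤ y ↔ LatticeEntails L B {(y, (⊥ : B))} {(x, (⊥ : B))}) := by
  refine ⟨⟨fun h E hE hA => ?_, fun h => ?_⟩, ⟨fun h E hE hA => ?_, fun h => ?_⟩⟩
  · refine entail_cut_finset hE _ _ (Finset.univ.image (fun a : B => (y, a))) ?_ ?_
    · have := hE.2.1 _ {(x, (⊤ : B))} _ {(y, (⊤ : B))}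
        (hA ∅ _ (Or.inr <| Or.inr <| Or.inr <| Or.inr <| Or.inr ⟨y, rfl, rfl⟩))
      rwa [Finset.empty_union] at this
    · intro z hz
      obtain ⟨a, _, rfl⟩ := Finset.mem_image.1 hz
      refine hA _ _ (Or.inr <| Or.inr <| Or.inl ⟨y, x, a, ⊤, rfl, ?_⟩)
      simp [h]
  · by_contra hn
    obtain ⟨f, h1, h2, h3, h4, h5, h6⟩ := exists_sep (B := B) x y hn
    have := semantic_entail f h1 h2 h3 h4 _ _ h (by simp [h5])
    simp [h6] at this
  · refine entail_cut_finset hE _ _ (Finset.univ.image (fun a : B => (x, a))) ?_ ?_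
    · have := hE.2.1 _ {(y, (⊥ : B))} _ {(x, (⊥ : B))}
        (hA ∅ _ (Or.inr <| Or.inr <| Or.inr <| Or.inr <| Or.inr ⟨x, rfl, rfl⟩))
      rwa [Finset.empty_union] at this
    · intro z hz
      obtain ⟨a, _, rfl⟩ := Finset.mem_image.1 hz
      refine hA _ _ (Or.inr <| Or.inl ⟨x, y, a, ⊥, rfl, ?_⟩)
      simp [h]
  · by_contra hn
    obtain ⟨f, h1, h2, h3, h4, h5, h6⟩ := exists_sep (B := B) x y hn
    have := semantic_entail f h1 h2 h3 h4 _ _ h (by simp [h6])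
    simp [h5] at this
end

section
/- (Representation Theorem for distributive lattices.) If L is a bounded distributive lattice and x, y ∈ L are such that x ≰ y, then there exists a bounded lattice homomorphism φ : L → 2 into the two-element Boolean algebra 2 = {0,1} such that φ(x) = 1 and φ(y) = 0. -/
theorem stmt12 {L : Type*} [DistribLattice L] [BoundedOrder L] (x y : L)
    (h : ¬ x ≤ y) :
    ∃ φ : BoundedLatticeHom L Bool, φ x = ⊤ ∧ φ y = ⊥ := by
  classical
  have hd : Disjoint ((Order.PFilter.principal x : Order.PFilter L) : Set L)
      ((Order.Ideal.principal y : Order.Ideal L) : Set L) := by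
    rw [Set.disjoint_left]
    intro a ha hb
    exact h (le_trans (Order.PFilter.mem_principal.1 ha) (Order.Ideal.mem_principal.1 hb))
  obtain ⟨J, hJ, hyJ, hxJ⟩ := DistribLattice.prime_ideal_of_disjoint_filter_ideal hd
  have hy : y ∈ J := hyJ (Order.Ideal.mem_principal.2 le_rfl)
  have hx : x ∉ J := fun hx =>
    Set.disjoint_left.1 hxJ (Order.PFilter.mem_principal.2 le_rfl) hx
  have htop : (⊤ : L) ∉ J := fun ht => hx (J.lower le_top ht)
  have hinf : ∀ a b : L, a ⊓ b ∈ J ↔ a ∈ J ∨ b ∈ J := fun a b =>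
    ⟨hJ.mem_or_mem, fun hab => hab.elim (fun ha => J.lower inf_le_left ha)
      (fun hb => J.lower inf_le_right hb)⟩
  refine ⟨{ toFun := fun a => !decide (a ∈ J)
            map_sup' := ?_
            map_inf' := ?_
            map_top' := ?_
            map_bot' := ?_ }, ?_, ?_⟩
  · intro a b
    by_cases ha : a ∈ J <;> by_cases hb : b ∈ J <;> simp [Order.Ideal.sup_mem_iff, ha, hb]
  · intro a b
    by_cases ha : a ∈ J <;> by_cases hb : b ∈ J <;> simp [hinf, ha, hb]
  · simp [htop]
  · simp
  · change (!decide (x ∈ J)) = ⊤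
    simp [hx]
  · change (!decide (y ∈ J)) = ⊥
    simp [hy]
end

section
/- Let φ : L → L' be an injective bounded lattice homomorphism between bounded distributive lattices and let B be a finite Boolean algebra. Let ⊢ and ⊢' be the entailment relations of B-valued lattice maps on L and on L' respectively, and let f_φ : L × B → L' × B be given by f_φ(x,a) = (φ(x), a). Then f_φ is a conservative interpretation: for all finite subsets X, Y of L × B, X ⊢ Y if and only if f_φ(X) ⊢' f_φ(Y). -/
variable (M : Type*) (D : Type*) [Lattice M] [BoundedOrder M] [Lattice D] [BoundedOrder D]
  [Fintype D] [DecidableEq M] [DecidableEq D]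

theorem ext_prop_aux {L L' : Type*} [DistribLattice L] [BoundedOrder L]
    [DistribLattice L'] [BoundedOrder L']
    (φ : BoundedLatticeHom L L') (hφ : Function.Injective φ)
    (h : L → Prop) (h0 : ¬ h ⊥) (h1 : h ⊤)
    (hi : ∀ x y, h (x ⊓ y) ↔ h x ∧ h y) (hs : ∀ x y, h (x ⊔ y) ↔ h x ∨ h y) :
    ∃ k : L' → Prop, (∀ x, k (φ x) ↔ h x) ∧ ¬ k ⊥ ∧ k ⊤ ∧
      (∀ x y, k (x ⊓ y) ↔ k x ∧ k y) ∧ (∀ x y, k (x ⊔ y) ↔ k x ∨ k y) := by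
  have hle : ∀ x y, φ x ≤ φ y → x ≤ y := by
    intro x y hxy
    have : φ (x ⊓ y) = φ x := by rw [map_inf]; exact inf_eq_left.2 hxy
    exact inf_eq_left.1 (hφ this)
  have hmono : ∀ x y, x ≤ y → h x → h y := by
    intro x y hxy hx
    rw [← inf_eq_left.2 hxy] at hx
    exact ((hi _ _).1 hx).2
  have hI : Order.IsIdeal {y : L' | ∃ x, ¬ h x ∧ y ≤ φ x} := by
    refine ⟨?_, ⟨φ ⊥, ⊥, h0, le_rfl⟩, ?_⟩
    · rintro a b hab ⟨x, hx, hax⟩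
      exact ⟨x, hx, hab.trans hax⟩
    · rintro a ⟨x, hx, hax⟩ b ⟨y, hy, hby⟩
      refine ⟨φ (x ⊔ y), ⟨x ⊔ y, ?_, le_rfl⟩, ?_, ?_⟩
      · rw [hs]; tauto
      · exact hax.trans (by rw [map_sup]; exact le_sup_left)
      · exact hby.trans (by rw [map_sup]; exact le_sup_right)
  have hF : Order.IsPFilter {y : L' | ∃ x, h x ∧ φ x ≤ y} := by
    refine Order.IsPFilter.of_def ⟨φ ⊤, ⊤, h1, le_rfl⟩ ?_ ?_
    · rintro a ⟨x, hx, hax⟩ b ⟨y, hy, hby⟩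
      refine ⟨φ (x ⊓ y), ⟨x ⊓ y, (hi _ _).2 ⟨hx, hy⟩, le_rfl⟩, ?_, ?_⟩
      · exact le_trans (by rw [map_inf]; exact inf_le_left) hax
      · exact le_trans (by rw [map_inf]; exact inf_le_right) hby
    · rintro a b hab ⟨x, hx, hax⟩
      exact ⟨x, hx, hax.trans hab⟩
  have hd : Disjoint (hF.toPFilter : Set L') (hI.toIdeal : Set L') := by
    rw [Set.disjoint_left]
    rintro y ⟨x, hx, hxy⟩ ⟨z, hz, hyz⟩
    exact hz (hmono _ _ (hle _ _ (hxy.trans hyz)) hx)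
  obtain ⟨J, hJ, hIJ, hFJ⟩ := DistribLattice.prime_ideal_of_disjoint_filter_ideal hd
  rw [Set.disjoint_left] at hFJ
  have hFm : ∀ x, h x → φ x ∉ J := fun x hx => hFJ (show φ x ∈ {y : L' | ∃ x, h x ∧ φ x ≤ y} from ⟨x, hx, le_rfl⟩)
  have hIm : ∀ x, ¬ h x → φ x ∈ J := fun x hx => hIJ (show φ x ∈ {y : L' | ∃ x, ¬ h x ∧ y ≤ φ x} from ⟨x, hx, le_rfl⟩)
  refine ⟨fun y => y ∉ J, fun x => ⟨fun hx => by_contra fun hn => hx (hIm x hn), hFm x⟩,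
    fun hn => hn J.bot_mem, ?_, fun x y => ?_, fun x y => ?_⟩
  · have := hFm ⊤ h1
    rwa [map_top] at this
  · constructor
    · intro hn
      exact ⟨fun hx => hn (J.lower inf_le_left hx), fun hy => hn (J.lower inf_le_right hy)⟩
    · rintro ⟨hx, hy⟩ hxy
      exact (hJ.mem_or_mem hxy).elim hx hy
  · simp only [Order.Ideal.sup_mem_iff]; tauto

theorem ext_bool_aux {L L' B : Type*} [DistribLattice L] [BoundedOrder L]
    [DistribLattice L'] [BoundedOrder L'] [BooleanAlgebra B] [Fintype B]
    (φ : BoundedLatticeHom L L') (hφ : Function.Injective φ)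
    (g : L → B) (g0 : g ⊥ = ⊥) (g1 : g ⊤ = ⊤)
    (gi : ∀ x y, g (x ⊓ y) = g x ⊓ g y) (gs : ∀ x y, g (x ⊔ y) = g x ⊔ g y) :
    ∃ k : L' → B, (∀ x, k (φ x) = g x) ∧ k ⊥ = ⊥ ∧ k ⊤ = ⊤ ∧
      (∀ x y, k (x ⊓ y) = k x ⊓ k y) ∧ (∀ x y, k (x ⊔ y) = k x ⊔ k y) := by
  obtain ⟨A, ⟨e⟩⟩ : ∃ A : Type _, Nonempty (B ≃o Set A) := by
    let _ := Fintype.toCompleteAtomicBooleanAlgebra B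
    exact ⟨{a : B // IsAtom a}, ⟨CompleteAtomicBooleanAlgebra.toSetOfIsAtom⟩⟩
  have key : ∀ p : A, _ := fun p => ext_prop_aux φ hφ (fun x => p ∈ e (g x))
    (by simp [g0]) (by simp [g1]) (by simp [gi]) (by simp [gs])
  choose k hk k0 k1 ki ks using key
  refine ⟨fun y => e.symm {p | k p y}, fun x => ?_, ?_, ?_, fun x y => ?_, fun x y => ?_⟩
  · apply e.injective; ext p; simp [hk]
  · apply e.injective; ext p; simp [k0]
  · apply e.injective; ext p; simp [k1]
  · apply e.injective; ext p; simp [ki]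
  · apply e.injective; ext p; simp [ks]

theorem complete_aux {S : Type*} [DecidableEq S] (E : Finset S → Finset S → Prop)
    (hE : IsEntailment E) (X Y : Finset S) (hXY : ¬ E X Y) :
    ∃ T : Set S, (↑X ⊆ T) ∧ (∀ y ∈ Y, y ∉ T) ∧
      ∀ A C : Finset S, E A C → ↑A ⊆ T → ∃ c ∈ C, c ∈ T := by
  obtain ⟨hR, hM, hT⟩ := hE
  have mono : ∀ {A A' C C' : Finset S}, A ⊆ A' → C ⊆ C' → E A C → E A' C' := by
    intro A A' C C' h1 h2 h
    have := hM A A' C C' h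
    rwa [Finset.union_eq_right.2 h1, Finset.union_eq_right.2 h2] at this
  obtain ⟨T, hXT, hmax⟩ := zorn_subset_nonempty
    {T : Set S | ∀ A : Finset S, ↑A ⊆ T → ¬ E A Y} (by
      intro c hc hch hne
      refine ⟨⋃₀ c, ?_, fun s hs => Set.subset_sUnion_of_mem hs⟩
      intro A hA
      obtain ⟨t, ht, hAt⟩ := hch.directedOn.exists_mem_subset_of_finite_of_subset_sUnion hne
        A.finite_toSet hA
      exact hc ht A hAt) (↑X) (by
      intro A hA hAY
      exact hXY (mono (by exact_mod_cast hA) subset_rfl hAY))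
  have hTp : ∀ A : Finset S, ↑A ⊆ T → ¬ E A Y := hmax.prop
  have hz : ∀ z, z ∉ T → ∃ A : Finset S, ↑A ⊆ T ∧ E (insert z A) Y := by
    intro z hzT
    by_contra hcon
    push Not at hcon
    apply hzT
    refine hmax.le_of_ge (y := insert z T) ?_ (Set.subset_insert z T) (Set.mem_insert z T)
    intro A hA hAY
    refine hcon (A.erase z) ?_ (mono ?_ subset_rfl hAY)
    · intro a ha
      simp only [Finset.coe_erase, Set.mem_diff, Set.mem_singleton_iff] at ha
      exact (hA ha.1).resolve_left ha.2
    · intro a ha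
      by_cases h : a = z <;> simp [h, ha]
  have main : ∀ C : Finset S, (∀ c ∈ C, c ∉ T) → ∀ A : Finset S, ↑A ⊆ T → ¬ E A (C ∪ Y) := by
    intro C
    induction C using Finset.induction_on with
    | empty => intro _ A hA; simpa using hTp A hA
    | insert z C hzC ih =>
      intro hC A hA hAE
      obtain ⟨A0, hA0, h0⟩ := hz z (hC z (Finset.mem_insert_self _ _))
      refine ih (fun c hc => hC c (Finset.mem_insert_of_mem hc)) (A ∪ A0)
        (by simp [hA, hA0]) (hT _ _ z ?_ ?_)
      · rw [← Finset.insert_union]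
        exact mono Finset.subset_union_left subset_rfl hAE
      · exact mono (Finset.insert_subset_insert _ Finset.subset_union_right)
          Finset.subset_union_right h0
  refine ⟨T, hXT, fun y hy hyT => ?_, fun A C hAC hA => ?_⟩
  · exact hTp {y} (by simpa using hyT) (hR _ _ ⟨y, by simp, hy⟩)
  · by_contra hcon
    push Not at hcon
    exact main C hcon A hA (mono subset_rfl Finset.subset_union_left hAC)

theorem latticeEntails_isEntailment_aux (P Q : Type*) [Lattice P] [BoundedOrder P] [Lattice Q]
    [BoundedOrder Q] [Fintype Q] [DecidableEq P] [DecidableEq Q] :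
    IsEntailment (LatticeEntails P Q) := by
  refine ⟨fun X Y h E hE _ => hE.1 X Y h, fun X X' Y Y' h E hE hA => hE.2.1 _ _ _ _ (h E hE hA),
    fun X Y z h1 h2 E hE hA => hE.2.2 X Y z (h1 E hE hA) (h2 E hE hA)⟩

theorem stmt13 {L L' B : Type*} [DistribLattice L] [BoundedOrder L]
    [DistribLattice L'] [BoundedOrder L'] [BooleanAlgebra B] [Fintype B]
    [DecidableEq L] [DecidableEq L'] [DecidableEq B]
    (φ : BoundedLatticeHom L L') (hφ : Function.Injective φ)
    (X Y : Finset (L × B)) :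
    LatticeEntails L B X Y ↔
      LatticeEntails L' B (X.image fun p => (φ p.1, p.2)) (Y.image fun p => (φ p.1, p.2)) := by
  constructor
  · intro h E hE hA
    refine h (fun X Y => E (X.image fun p => (φ p.1, p.2)) (Y.image fun p => (φ p.1, p.2)))
      ⟨?_, ?_, ?_⟩ ?_
    · rintro X Y ⟨x, hx, hy⟩
      exact hE.1 _ _ ⟨_, Finset.mem_image_of_mem _ hx, Finset.mem_image_of_mem _ hy⟩
    · intro X X' Y Y' h
      simp only [Finset.image_union]
      exact hE.2.1 _ _ _ _ h
    · intro X Y z h1 h2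
      simp only [Finset.image_insert] at h1 h2
      exact hE.2.2 _ _ _ h1 h2
    · intro X Y hXY
      apply hA
      rcases hXY with ⟨x, a, b, hab, rfl, rfl⟩ | ⟨x, y, a, b, rfl, rfl⟩ | ⟨x, y, a, b, rfl, rfl⟩ |
        ⟨rfl, rfl⟩ | ⟨rfl, rfl⟩ | ⟨x, rfl, rfl⟩
      · exact Or.inl ⟨φ x, a, b, hab, by simp [Finset.image_insert], by simp⟩
      · exact Or.inr (Or.inl ⟨φ x, φ y, a, b, by simp [Finset.image_insert], by simp⟩)
      · exact Or.inr (Or.inr (Or.inl ⟨φ x, φ y, a, b, by simp [Finset.image_insert], by simp⟩))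
      · exact Or.inr (Or.inr (Or.inr (Or.inl ⟨by simp, by simp⟩)))
      · exact Or.inr (Or.inr (Or.inr (Or.inr (Or.inl ⟨by simp, by simp⟩))))
      · refine Or.inr (Or.inr (Or.inr (Or.inr (Or.inr ⟨φ x, by simp, ?_⟩))))
        rw [Finset.image_image]; rfl
  · intro h
    by_contra hn
    obtain ⟨T, hXT, hYT, hT⟩ := complete_aux _ (latticeEntails_isEntailment_aux L B) X Y hn
    have hT' : ∀ A C : Finset (L × B), LatticeAxioms L B A C → ↑A ⊆ T → ∃ c ∈ C, c ∈ T :=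
      fun A C hAC => hT A C (fun E _ hA => hA _ _ hAC)
    have tot : ∀ x, ∃ a, (x, a) ∈ T := by
      intro x
      obtain ⟨c, hc, hcT⟩ := hT' _ _
        (Or.inr (Or.inr (Or.inr (Or.inr (Or.inr ⟨x, rfl, rfl⟩))))) (by simp)
      simp only [Finset.mem_image, Finset.mem_univ, true_and] at hc
      obtain ⟨a, rfl⟩ := hc
      exact ⟨a, hcT⟩
    choose g hg using tot
    have uniq : ∀ x a, (x, a) ∈ T → g x = a := by
      intro x a hxa
      by_contra hne
      obtain ⟨c, hc, _⟩ := hT' _ _ (Or.inl ⟨x, g x, a, hne, rfl, rfl⟩)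
        (by simp [Set.insert_subset_iff, hg, hxa])
      simp at hc
    obtain ⟨k, hk, k0, k1, ki, ks⟩ := ext_bool_aux φ hφ g
      (by
        apply uniq
        simpa using hT' _ _ (Or.inr (Or.inr (Or.inr (Or.inl ⟨rfl, rfl⟩)))) (by simp))
      (by
        apply uniq
        simpa using hT' _ _ (Or.inr (Or.inr (Or.inr (Or.inr (Or.inl ⟨rfl, rfl⟩))))) (by simp))
      (by
        intro x y
        apply uniq
        simpa using hT' _ _ (Or.inr (Or.inl ⟨x, y, g x, g y, rfl, rfl⟩))
          (by simp [Set.insert_subset_iff, hg]))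
      (by
        intro x y
        apply uniq
        simpa using hT' _ _ (Or.inr (Or.inr (Or.inl ⟨x, y, g x, g y, rfl, rfl⟩)))
          (by simp [Set.insert_subset_iff, hg]))
    have := h (fun X Y => (∀ p ∈ X, k p.1 = p.2) → ∃ p ∈ Y, k p.1 = p.2) ⟨?_, ?_, ?_⟩ ?_ ?_
    · obtain ⟨p, hp, hpk⟩ := this
      obtain ⟨q, hq, rfl⟩ := Finset.mem_image.1 hp
      apply hYT q hq
      have : g q.1 = q.2 := by rw [← hk]; exact hpk
      have h2 := hg q.1
      rwa [this] at h2
    · rintro X Y ⟨x, hx, hy⟩ hX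
      exact ⟨x, hy, hX x hx⟩
    · intro X X' Y Y' h hX
      obtain ⟨p, hp, hpk⟩ := h fun p hp => hX p (Finset.mem_union_left _ hp)
      exact ⟨p, Finset.mem_union_left _ hp, hpk⟩
    · intro X Y z h1 h2 hX
      obtain ⟨p, hp, hpk⟩ := h1 hX
      rcases Finset.mem_insert.1 hp with rfl | hp
      · apply h2
        intro q hq
        rcases Finset.mem_insert.1 hq with rfl | hq
        · exact hpk
        · exact hX q hq
      · exact ⟨p, hp, hpk⟩
    · rintro X Y (⟨x, a, b, hab, rfl, rfl⟩ | ⟨x, y, a, b, rfl, rfl⟩ | ⟨x, y, a, b, rfl, rfl⟩ |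
        ⟨rfl, rfl⟩ | ⟨rfl, rfl⟩ | ⟨x, rfl, rfl⟩) hX
      · simp at hX
        exact absurd (hX.1.symm.trans hX.2) hab
      · simp at hX
        simp [ki, hX]
      · simp at hX
        simp [ks, hX]
      · simp [k0]
      · simp [k1]
      · simp
    · intro p hp
      obtain ⟨q, hq, rfl⟩ := Finset.mem_image.1 hp
      show k (φ q.1) = q.2
      rw [hk]
      exact uniq _ _ (hXT hq)
end

section
/- Let φ : L → L' be a bounded lattice homomorphism between bounded distributive lattices and let B be a finite Boolean algebra with 0_B ≠ 1_B. Let ⊢ and ⊢' be the entailment relations of B-valued lattice maps on L and on L' respectively, and let f_φ(x,a) = (φ(x), a). If f_φ is conservative, i.e. f_φ(X) ⊢' f_φ(Y) implies X ⊢ Y for all finite X, Y ⊆ L × B, then φ is injective. -/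
variable (M : Type*) (D : Type*) [Lattice M] [BoundedOrder M] [Lattice D] [BoundedOrder D]
  [Fintype D] [DecidableEq M] [DecidableEq D]

/-- Soundness with respect to a bounded-lattice-map valuation. -/
theorem latticeEntails_sound {L B : Type*} [Lattice L] [BoundedOrder L] [Lattice B]
    [BoundedOrder B] [Fintype B] [DecidableEq L] [DecidableEq B] (h : L → B)
    (hinf : ∀ x y, h (x ⊓ y) = h x ⊓ h y) (hsup : ∀ x y, h (x ⊔ y) = h x ⊔ h y)
    (hbot : h ⊥ = ⊥) (htop : h ⊤ = ⊤) (X Y : Finset (L × B)) (H : LatticeEntails L B X Y)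
    (hX : ∀ p ∈ X, h p.1 = p.2) : ∃ p ∈ Y, h p.1 = p.2 := by
  refine H (fun X Y => (∀ p ∈ X, h p.1 = p.2) → ∃ p ∈ Y, h p.1 = p.2) ⟨?_, ?_, ?_⟩ ?_ hX
  · rintro X Y ⟨x, hx, hy⟩ hX
    exact ⟨x, hy, hX x hx⟩
  · intro X X' Y Y' hE hX
    obtain ⟨p, hp, hq⟩ := hE fun p hp => hX p (Finset.mem_union_left _ hp)
    exact ⟨p, Finset.mem_union_left _ hp, hq⟩
  · intro X Y z h1 h2 hX
    obtain ⟨p, hp, hq⟩ := h1 hX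
    rcases Finset.mem_insert.1 hp with rfl | hp
    · refine h2 fun q hq' => ?_
      rcases Finset.mem_insert.1 hq' with rfl | hq'
      · exact hq
      · exact hX q hq'
    · exact ⟨p, hp, hq⟩
  · rintro X Y (⟨x, a, b, hab, rfl, rfl⟩ | ⟨x, y, a, b, rfl, rfl⟩ | ⟨x, y, a, b, rfl, rfl⟩ |
      ⟨rfl, rfl⟩ | ⟨rfl, rfl⟩ | ⟨x, rfl, rfl⟩) hX
    · have h1 := hX (x, a) (by simp)
      have h2 := hX (x, b) (by simp)
      exact absurd (h1.symm.trans h2) hab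
    · have h1 := hX (x, a) (by simp)
      have h2 := hX (y, b) (by simp)
      exact ⟨_, Finset.mem_singleton_self _, by simp_all⟩
    · have h1 := hX (x, a) (by simp)
      have h2 := hX (y, b) (by simp)
      exact ⟨_, Finset.mem_singleton_self _, by simp_all⟩
    · exact ⟨_, Finset.mem_singleton_self _, hbot⟩
    · exact ⟨_, Finset.mem_singleton_self _, htop⟩
    · exact ⟨(x, h x), by simp, rfl⟩

theorem le_of_latticeEntails {L B : Type*} [DistribLattice L] [BoundedOrder L] [Lattice B]
    [BoundedOrder B] [Fintype B] [Nontrivial B] [DecidableEq L] [DecidableEq B] (x y : L)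
    (H : LatticeEntails L B {(x, ⊤)} {(y, ⊤)}) : x ≤ y := by
  classical
  by_contra hxy
  obtain ⟨J, hJ, hyJ, hdis⟩ := DistribLattice.prime_ideal_of_disjoint_filter_ideal
    (F := Order.PFilter.principal x) (I := Order.Ideal.principal y) (by
      rw [Set.disjoint_left]
      intro z hz hz'
      exact hxy (le_trans (Order.PFilter.mem_principal.1 hz) (Order.Ideal.mem_principal.1 hz')))
  have hy : y ∈ J := hyJ (Order.Ideal.mem_principal.2 le_rfl)
  have hx : x ∉ J := fun hx =>
    Set.disjoint_left.1 hdis (Order.PFilter.mem_principal.2 le_rfl) hx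
  have htopJ : (⊤ : L) ∉ J := fun ht => hx (J.lower le_top ht)
  obtain ⟨p, hp, hq⟩ := latticeEntails_sound (fun z => if z ∈ J then (⊥ : B) else ⊤)
    (by
      intro a b
      have : a ⊓ b ∈ J ↔ a ∈ J ∨ b ∈ J :=
        ⟨hJ.mem_or_mem, fun h => h.elim (J.lower inf_le_left) (J.lower inf_le_right)⟩
      by_cases ha : a ∈ J <;> by_cases hb : b ∈ J <;> simp [this, ha, hb])
    (by
      intro a b
      by_cases ha : a ∈ J <;> by_cases hb : b ∈ J <;> simp [Order.Ideal.sup_mem_iff, ha, hb])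
    (by simp) (by simp [htopJ]) _ _ H (by simp [hx])
  rw [Finset.mem_singleton] at hp
  subst hp
  simp [hy] at hq

theorem stmt14 {L L' B : Type*} [DistribLattice L] [BoundedOrder L]
    [DistribLattice L'] [BoundedOrder L'] [BooleanAlgebra B] [Fintype B] [Nontrivial B]
    [DecidableEq L] [DecidableEq L'] [DecidableEq B]
    (φ : BoundedLatticeHom L L')
    (hcons : ∀ X Y : Finset (L × B),
      LatticeEntails L' B (X.image fun p => (φ p.1, p.2)) (Y.image fun p => (φ p.1, p.2)) →
      LatticeEntails L B X Y) :
    Function.Injective φ := by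
  have key : ∀ x y, φ x = φ y → x ≤ y := by
    intro x y hxy
    refine le_of_latticeEntails (B := B) x y (hcons _ _ ?_)
    intro E hE _
    exact hE.1 _ _ ⟨(φ x, ⊤), by simp, by simp [hxy]⟩
  intro x y hxy
  exact le_antisymm (key x y hxy) (key y x hxy.symm)
end

section
/- (Sikorski's theorem for finite Boolean algebras.) Every finite Boolean algebra B is injective in the category of bounded distributive lattices: for every injective bounded lattice homomorphism φ : L → L' between bounded distributive lattices and every bounded lattice homomorphism α : L → B, there exists a bounded lattice homomorphism β : L' → B such that β ∘ φ = α. -/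
theorem atom_le_sup_iff {B : Type*} [BooleanAlgebra B] {a : B} (ha : IsAtom a) (x y : B) :
    a ≤ x ⊔ y ↔ a ≤ x ∨ a ≤ y := by
  constructor
  · intro h
    by_contra! hc
    have h1 : Disjoint a x := (ha.not_le_iff_disjoint).1 hc.1
    have h2 : Disjoint a y := (ha.not_le_iff_disjoint).1 hc.2
    exact ha.1 (disjoint_self.1 ((h1.sup_right h2).mono_right h))
  · rintro (h | h)
    · exact le_sup_of_le_left h
    · exact le_sup_of_le_right h

theorem exists_prime_ext {B : Type*} [BooleanAlgebra B]
    {L L' : Type*} [DistribLattice L] [BoundedOrder L] [DistribLattice L'] [BoundedOrder L']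
    (φ : BoundedLatticeHom L L') (hφ : Function.Injective φ)
    (α : BoundedLatticeHom L B) (a : B) (ha : IsAtom a) :
    ∃ J : Order.Ideal L', J.IsPrime ∧ ∀ x, φ x ∈ J ↔ ¬ a ≤ α x := by
  have hle : ∀ x x', φ x ≤ φ x' → x ≤ x' := fun x x' h => by
    rw [← inf_eq_left] at h ⊢
    apply hφ
    rw [map_inf, h]
  have hF : Order.IsPFilter {y : L' | ∃ x, a ≤ α x ∧ φ x ≤ y} := by
    refine .of_def ⟨⊤, ⊤, by simp⟩ ?_ ?_
    · rintro y ⟨x, h1, h2⟩ y' ⟨x', h1', h2'⟩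
      exact ⟨y ⊓ y', ⟨x ⊓ x', by rw [map_inf]; exact le_inf h1 h1',
        by rw [map_inf]; exact inf_le_inf h2 h2'⟩, inf_le_left, inf_le_right⟩
    · rintro y y' h ⟨x, h1, h2⟩
      exact ⟨x, h1, h2.trans h⟩
  have hI : Order.IsIdeal {y : L' | ∃ x, ¬ a ≤ α x ∧ y ≤ φ x} := by
    refine ⟨?_, ⟨⊥, ⊥, by simpa using ha.1⟩, ?_⟩
    · rintro y y' h ⟨x, h1, h2⟩
      exact ⟨x, h1, le_trans h h2⟩
    · rintro y ⟨x, h1, h2⟩ y' ⟨x', h1', h2'⟩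
      refine ⟨y ⊔ y', ⟨x ⊔ x', ?_, by rw [map_sup]; exact sup_le_sup h2 h2'⟩,
        le_sup_left, le_sup_right⟩
      rw [map_sup, atom_le_sup_iff ha]
      tauto
  have hd : Disjoint ((hF.toPFilter : Order.PFilter L') : Set L')
      ((hI.toIdeal : Order.Ideal L') : Set L') := by
    rw [Set.disjoint_left]
    rintro y ⟨x, h1, h2⟩ ⟨x', h1', h2'⟩
    exact h1' (h1.trans (OrderHomClass.mono α (hle _ _ (h2.trans h2'))))
  obtain ⟨J, hJ, hIJ, hFJ⟩ := DistribLattice.prime_ideal_of_disjoint_filter_ideal hd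
  refine ⟨J, hJ, fun x => ⟨fun h h' => ?_, fun h => hIJ ⟨x, h, le_rfl⟩⟩⟩
  exact Set.disjoint_left.1 hFJ ⟨x, h', le_rfl⟩ h

theorem stmt15 {B : Type*} [BooleanAlgebra B] [Fintype B]
    {L L' : Type*} [DistribLattice L] [BoundedOrder L] [DistribLattice L'] [BoundedOrder L']
    (φ : BoundedLatticeHom L L') (hφ : Function.Injective φ)
    (α : BoundedLatticeHom L B) :
    ∃ β : BoundedLatticeHom L' B, ∀ x : L, β (φ x) = α x := by
  classical
  have hle : ∀ x y : B, (∀ a, IsAtom a → a ≤ x → a ≤ y) → x ≤ y := fun x y h => by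
    rcases IsAtomic.eq_bot_or_exists_atom_le (x \ y) with h0 | ⟨a, ha, hax⟩
    · exact sdiff_eq_bot_iff.1 h0
    · have h1 : a ≤ y := h a ha (hax.trans sdiff_le)
      exact absurd (disjoint_self.1 (Disjoint.mono hax h1 disjoint_sdiff_self_left)) ha.1
  have hext : ∀ x y : B, (∀ a, IsAtom a → (a ≤ x ↔ a ≤ y)) → x = y := fun x y h =>
    le_antisymm (hle _ _ fun a ha => (h a ha).1) (hle _ _ fun a ha => (h a ha).2)
  choose J hJ hJφ using exists_prime_ext φ hφ α
  let f : L' → B := fun y =>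
    (Finset.univ.filter fun a : B => ∃ h : IsAtom a, y ∉ J a h).sup id
  have hf : ∀ y b (hb : IsAtom b), b ≤ f y ↔ y ∉ J b hb := by
    intro y b hb
    constructor
    · intro h hy
      have : Disjoint b (f y) := by
        refine Finset.disjoint_sup_right.2 fun c hc => ?_
        obtain ⟨hc, hcy⟩ := (Finset.mem_filter.1 hc).2
        refine hb.disjoint_of_ne hc ?_
        rintro rfl
        exact hcy hy
      exact hb.1 (disjoint_self.1 (this.mono_right h))
    · intro hy
      exact Finset.le_sup (f := id) (Finset.mem_filter.2 ⟨Finset.mem_univ _, hb, hy⟩)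
  refine ⟨{ toFun := f, map_sup' := ?_, map_inf' := ?_, map_top' := ?_, map_bot' := ?_ }, ?_⟩
  · intro x y
    refine hext _ _ fun a ha => ?_
    rw [atom_le_sup_iff ha, hf _ _ ha, hf _ _ ha, hf _ _ ha, Order.Ideal.sup_mem_iff]
    tauto
  · intro x y
    refine hext _ _ fun a ha => ?_
    rw [le_inf_iff, hf _ _ ha, hf _ _ ha, hf _ _ ha]
    have h1 := (hJ a ha).mem_or_mem (x := x) (y := y)
    have h2 : x ∈ J a ha → x ⊓ y ∈ J a ha := (J a ha).lower inf_le_left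
    have h3 : y ∈ J a ha → x ⊓ y ∈ J a ha := (J a ha).lower inf_le_right
    tauto
  · refine hext _ _ fun a ha => ?_
    rw [hf _ _ ha, ← map_top φ, hJφ]
    simp
  · refine hext _ _ fun a ha => ?_
    rw [hf _ _ ha, ← map_bot φ, hJφ]
    simp
  · intro x
    refine hext _ _ fun a ha => ?_
    change a ≤ f (φ x) ↔ _
    rw [hf _ _ ha, hJφ, not_not]
end

section
/- Let H be a Heyting algebra, B a finite Boolean algebra, and ⊢ the entailment relation of B-valued Heyting algebra maps on H. Then for every (x,a) ∈ H × B both {(x,a)} ⊢ {(¬¬x, a)} and {(¬¬x, a)} ⊢ {(x,a)} hold, where ¬ denotes the Heyting negation ¬x = x → 0. -/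
variable (H : Type*) (B : Type*) [HeytingAlgebra H] [BooleanAlgebra B]
  [Fintype B] [DecidableEq H] [DecidableEq B]

/-- The generating axioms (s), (∧), (∨), (→), (0), (1), (t) for the entailment relation
of `B`-valued Heyting algebra maps on `H`. -/
def HeytingAxioms : Finset (H × B) → Finset (H × B) → Prop := fun X Y =>
  (∃ x a b, a ≠ b ∧ X = {(x, a), (x, b)} ∧ Y = ∅) ∨
  (∃ x y a b, X = {(x, a), (y, b)} ∧ Y = {(x ⊓ y, a ⊓ b)}) ∨
  (∃ x y a b, X = {(x, a), (y, b)} ∧ Y = {(x ⊔ y, a ⊔ b)}) ∨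
  (∃ x y a b, X = {(x, a), (y, b)} ∧ Y = {(x ⇨ y, a ⇨ b)}) ∨
  (X = ∅ ∧ Y = {((⊥ : H), (⊥ : B))}) ∨
  (X = ∅ ∧ Y = {((⊤ : H), (⊤ : B))}) ∨
  (∃ x : H, X = ∅ ∧ Y = Finset.univ.image (fun a : B => (x, a)))

/-- The least entailment relation on `H × B` containing all the generating axioms:
the entailment relation of `B`-valued Heyting algebra maps on `H`. -/
def HeytingEntails (X Y : Finset (H × B)) : Prop :=
  ∀ E : Finset (H × B) → Finset (H × B) → Prop,
    IsEntailment E → (∀ X' Y', HeytingAxioms H B X' Y' → E X' Y') → E X Y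

theorem IsEntailment.mono' {S : Type*} [DecidableEq S] {E : Finset S → Finset S → Prop}
    (h : IsEntailment E) {X X' Y Y' : Finset S} (hE : E X Y) (hX : X ⊆ X') (hY : Y ⊆ Y') :
    E X' Y' := by
  have := h.2.1 X X' Y Y' hE
  rwa [Finset.union_eq_right.2 hX, Finset.union_eq_right.2 hY] at this

theorem IsEntailment.cuts {S : Type*} [DecidableEq S] {E : Finset S → Finset S → Prop}
    (h : IsEntailment E) {X Y : Finset S} (Z : Finset S) (hE : E X (Z ∪ Y))
    (hZ : ∀ z ∈ Z, E (insert z X) Y) : E X Y := by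
  induction Z using Finset.induction_on with
  | empty => simpa using hE
  | insert z Z hz ih =>
    refine ih ?_ (fun w hw => hZ w (Finset.mem_insert_of_mem hw))
    refine h.2.2 _ _ z (by rwa [Finset.insert_union] at hE) ?_
    exact h.mono' (hZ z (Finset.mem_insert_self _ _)) (Finset.Subset.refl _)
      Finset.subset_union_right

theorem stmt16 {H B : Type*} [HeytingAlgebra H] [BooleanAlgebra B]
    [Fintype B] [DecidableEq H] [DecidableEq B] (x : H) (a : B) :
    HeytingEntails H B {(x, a)} {(xᶜᶜ, a)} ∧ HeytingEntails H B {(xᶜᶜ, a)} {(x, a)} := by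
  have key : ∀ E : Finset (H × B) → Finset (H × B) → Prop, IsEntailment E →
      (∀ X' Y', HeytingAxioms H B X' Y' → E X' Y') →
      ∀ (x : H) (a : B), E {(x, a)} {(xᶜᶜ, a)} := by
    intro E hE hA
    have neg : ∀ (x : H) (a : B), E {(x, a)} {(xᶜ, aᶜ)} := by
      intro x a
      refine hE.2.2 _ _ (⊥, ⊥) ?_ ?_
      · exact hE.mono' (hA ∅ {(⊥, ⊥)} (by unfold HeytingAxioms; tauto)) (by simp) (by simp)
      · have := hA {(x, a), (⊥, ⊥)} {(x ⇨ ⊥, a ⇨ ⊥)}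
          (Or.inr <| Or.inr <| Or.inr <| Or.inl ⟨x, ⊥, a, ⊥, rfl, rfl⟩)
        rw [himp_bot, himp_bot, Finset.pair_comm] at this
        exact this
    intro x a
    refine hE.2.2 _ _ (xᶜ, aᶜ) (hE.mono' (neg x a) (by simp) (by simp)) ?_
    have := neg xᶜ aᶜ
    rw [compl_compl] at this
    exact hE.mono' this (by simp) (by simp)
  refine ⟨fun E hE hA => key E hE hA x a, fun E hE hA => ?_⟩
  refine hE.cuts (Finset.univ.image (fun b : B => (x, b))) ?_ ?_
  · exact hE.mono' (hA ∅ _ (Or.inr <| Or.inr <| Or.inr <| Or.inr <| Or.inr <| Or.inr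
      ⟨x, rfl, rfl⟩)) (by simp) Finset.subset_union_left
  · intro z hz
    obtain ⟨b, -, rfl⟩ := Finset.mem_image.1 hz
    by_cases hab : a = b
    · subst hab
      exact hE.1 _ _ ⟨(x, a), by simp, by simp⟩
    · refine hE.2.2 _ _ (xᶜᶜ, b) (hE.mono' (key E hE hA x b) (by simp) (by simp)) ?_
      refine hE.mono' (hA {(xᶜᶜ, a), (xᶜᶜ, b)} ∅ (Or.inl ⟨_, a, b, hab, rfl, rfl⟩)) ?_ (by simp)
      intro w hw
      simp only [Finset.mem_insert, Finset.mem_singleton] at hw ⊢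
      tauto
end

section
/- For every finite distributive bounded lattice D, the following are equivalent: (1) D is complemented, i.e. every element of D has a complement (so D is a Boolean algebra); (2) D is injective in the category of bounded distributive lattices, i.e. for every injective bounded lattice homomorphism φ : L → L' between bounded distributive lattices and every bounded lattice homomorphism f : L → D there exists a bounded lattice homomorphism g : L' → D with g ∘ φ = f. -/
theorem stmt18_prime {L : Type u} {L' : Type w} [DistribLattice L] [BoundedOrder L]
    [DistribLattice L'] [BoundedOrder L'] (φ : BoundedLatticeHom L L')
    (hφ : Function.Injective φ) (p : L → Prop) (h0 : ¬ p ⊥) (h1 : p ⊤)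
    (hi : ∀ x y, p (x ⊓ y) ↔ p x ∧ p y) (hs : ∀ x y, p (x ⊔ y) ↔ p x ∨ p y) :
    ∃ q : L' → Prop, ¬ q ⊥ ∧ q ⊤ ∧ (∀ x y, q (x ⊓ y) ↔ q x ∧ q y) ∧
      (∀ x y, q (x ⊔ y) ↔ q x ∨ q y) ∧ ∀ x, q (φ x) ↔ p x := by
  have hF : Order.IsPFilter {y : L' | ∃ x, p x ∧ φ x ≤ y} := by
    refine Order.IsPFilter.of_def ⟨⊤, ⊤, h1, le_top⟩ ?_ ?_
    · rintro a ⟨x, hx, hxa⟩ b ⟨y, hy, hyb⟩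
      refine ⟨a ⊓ b, ⟨x ⊓ y, (hi x y).2 ⟨hx, hy⟩, ?_⟩, inf_le_left, inf_le_right⟩
      rw [map_inf]; exact inf_le_inf hxa hyb
    · rintro a b hab ⟨x, hx, hxa⟩
      exact ⟨x, hx, hxa.trans hab⟩
  have hI : Order.IsIdeal {y : L' | ∃ x, ¬ p x ∧ y ≤ φ x} := by
    refine ⟨?_, ⟨⊥, ⊥, h0, bot_le⟩, ?_⟩
    · rintro a b hab ⟨x, hx, hxa⟩
      exact ⟨x, hx, hab.trans hxa⟩
    · rintro a ⟨x, hx, hxa⟩ b ⟨y, hy, hyb⟩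
      refine ⟨a ⊔ b, ⟨x ⊔ y, fun h => ((hs x y).1 h).elim hx hy, ?_⟩, le_sup_left, le_sup_right⟩
      rw [map_sup]; exact sup_le_sup hxa hyb
  have hd : Disjoint (hF.toPFilter : Set L') (hI.toIdeal : Set L') := by
    rw [Set.disjoint_left]
    rintro a ⟨x, hx, hxa⟩ ⟨y, hy, hya⟩
    have h : φ (x ⊓ y) = φ x := by rw [map_inf]; exact inf_eq_left.2 (hxa.trans hya)
    have h2 := hφ h
    rw [← h2, hi] at hx
    exact hy hx.2
  obtain ⟨J, hJ, hIJ, hFJ⟩ := DistribLattice.prime_ideal_of_disjoint_filter_ideal hd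
  rw [Set.disjoint_left] at hFJ
  refine ⟨fun y => y ∉ J, fun h => h J.bot_mem, ?_, ?_, ?_, ?_⟩
  · exact fun h => hFJ (a := ⊤) ⟨⊤, h1, le_top⟩ h
  · intro x y
    refine ⟨fun h => ⟨fun hx => h (J.lower inf_le_left hx), fun hy => h (J.lower inf_le_right hy)⟩,
      fun h hxy => (hJ.mem_or_mem hxy).elim h.1 h.2⟩
  · intro x y
    beta_reduce; rw [Order.Ideal.sup_mem_iff]; tauto
  · intro x
    constructor
    · intro h
      by_contra hx
      exact h (hIJ (show φ x ∈ {y : L' | ∃ x, ¬ p x ∧ y ≤ φ x} from ⟨x, hx, le_rfl⟩))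
    · intro hx h
      exact hFJ (a := φ x) ⟨x, hx, le_rfl⟩ h

theorem stmt18_atom_sup {D : Type v} [DistribLattice D] [BoundedOrder D] {a : D} (ha : IsAtom a)
    (x y : D) : a ≤ x ⊔ y ↔ a ≤ x ∨ a ≤ y := by
  refine ⟨fun h => ?_, fun h => h.elim le_sup_of_le_left le_sup_of_le_right⟩
  by_contra! hc
  have h1 := (ha.not_le_iff_disjoint.1 hc.1).eq_bot
  have h2 := (ha.not_le_iff_disjoint.1 hc.2).eq_bot
  have : a ⊓ (x ⊔ y) = ⊥ := by rw [inf_sup_left, h1, h2, sup_bot_eq]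
  rw [inf_eq_left.2 h] at this
  exact ha.1 this

theorem stmt18_ext {D : Type v} [DistribLattice D] [BoundedOrder D] [Fintype D]
    (hc : ∀ d : D, ∃ d' : D, d ⊓ d' = ⊥ ∧ d ⊔ d' = ⊤) {x y : D}
    (h : ∀ a, IsAtom a → (a ≤ x ↔ a ≤ y)) : x = y := by
  have key : ∀ x y : D, (∀ a, IsAtom a → a ≤ x → a ≤ y) → x ≤ y := by
    intro x y h
    obtain ⟨z, hz0, hz1⟩ := hc y
    have hxz : x ⊓ z = ⊥ := by
      rcases IsAtomic.eq_bot_or_exists_atom_le (x ⊓ z) with h' | ⟨a, ha, hle⟩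
      · exact h'
      · have h3 := le_inf (h a ha (hle.trans inf_le_left)) (hle.trans inf_le_right)
        rw [hz0] at h3
        exact (ha.1 (le_bot_iff.1 h3)).elim
    have : x ⊓ (y ⊔ z) = x ⊓ y := by rw [inf_sup_left, hxz, sup_bot_eq]
    rw [hz1, inf_top_eq] at this
    exact inf_eq_left.1 this.symm
  exact le_antisymm (key x y fun a ha => (h a ha).1) (key y x fun a ha => (h a ha).2)

theorem stmt18 {D : Type v} [DistribLattice D] [BoundedOrder D] [Fintype D] :
    (∀ d : D, ∃ d' : D, d ⊓ d' = ⊥ ∧ d ⊔ d' = ⊤) ↔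
    (∀ (L L' : Type u) [DistribLattice L] [BoundedOrder L]
        [DistribLattice L'] [BoundedOrder L']
        (φ : BoundedLatticeHom L L'), Function.Injective φ →
        ∀ f : BoundedLatticeHom L D, ∃ g : BoundedLatticeHom L' D, ∀ x : L, g (φ x) = f x) := by
  classical
  constructor
  · intro hc L L' _ _ _ _ φ hφ f
    have hq : ∀ a : D, ∃ q : L' → Prop, IsAtom a → (¬ q ⊥ ∧ q ⊤ ∧ (∀ x y, q (x ⊓ y) ↔ q x ∧ q y) ∧
      (∀ x y, q (x ⊔ y) ↔ q x ∨ q y) ∧ ∀ x, q (φ x) ↔ a ≤ f x) := by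
      intro a
      by_cases ha : IsAtom a
      · obtain ⟨q, hq⟩ := stmt18_prime φ hφ (fun x => a ≤ f x)
          (by rw [map_bot, le_bot_iff]; exact ha.1) (by rw [map_top]; exact le_top)
          (by intro x y; rw [map_inf, le_inf_iff])
          (by intro x y; rw [map_sup]; exact stmt18_atom_sup ha _ _)
        exact ⟨q, fun _ => hq⟩
      · exact ⟨fun _ => True, fun h => (ha h).elim⟩
    choose q hq using hq
    let g : L' → D := fun y => (Finset.univ.filter (fun a => IsAtom a ∧ q a y)).sup id
    have hle : ∀ (s : Finset D) (a : D), IsAtom a → a ≤ s.sup id → ∃ b ∈ s, a ≤ b := by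
      intro s a ha
      induction s using Finset.induction_on with
      | empty => intro h; exact (ha.1 (le_bot_iff.1 (by simpa using h))).elim
      | insert b s _ ih =>
        rw [Finset.sup_insert, stmt18_atom_sup ha]
        rintro (h | h)
        · exact ⟨b, Finset.mem_insert_self _ _, h⟩
        · obtain ⟨c, hc, hac⟩ := ih h
          exact ⟨c, Finset.mem_insert_of_mem hc, hac⟩
    have hg : ∀ a, IsAtom a → ∀ y, a ≤ g y ↔ q a y := by
      intro a ha y
      constructor
      · intro h
        obtain ⟨b, hb, hab⟩ := hle _ a ha h
        rw [Finset.mem_filter] at hb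
        have hab' : a = b := (hb.2.1.le_iff.1 hab).resolve_left ha.1
        rw [hab']; exact hb.2.2
      · intro h
        exact Finset.le_sup (f := id) (Finset.mem_filter.2 ⟨Finset.mem_univ a, ha, h⟩)
    refine ⟨{ toFun := g, map_sup' := ?_, map_inf' := ?_, map_top' := ?_, map_bot' := ?_ }, ?_⟩
    · intro x y
      refine stmt18_ext hc fun a ha => ?_
      rw [stmt18_atom_sup ha, hg a ha, hg a ha, hg a ha]
      exact (hq a ha).2.2.2.1 x y
    · intro x y
      refine stmt18_ext hc fun a ha => ?_
      rw [le_inf_iff, hg a ha, hg a ha, hg a ha]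
      exact (hq a ha).2.2.1 x y
    · refine stmt18_ext hc fun a ha => ?_
      change a ≤ g ⊤ ↔ _
      rw [hg a ha]
      exact iff_of_true (hq a ha).2.1 le_top
    · refine stmt18_ext hc fun a ha => ?_
      change a ≤ g ⊥ ↔ _
      rw [hg a ha, le_bot_iff]
      exact iff_of_false (hq a ha).1 ha.1
    · intro x
      refine stmt18_ext hc fun a ha => ?_
      change a ≤ g (φ x) ↔ _
      rw [hg a ha]
      exact (hq a ha).2.2.2.2 x
  · intro H d
    let m : Fin 3 → Bool × Bool := ![(false, false), (true, false), (true, true)]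
    let k : Fin 3 → D := ![⊥, d, ⊤]
    have ms : ∀ x y, m (x ⊔ y) = m x ⊔ m y := by decide
    have mi : ∀ x y, m (x ⊓ y) = m x ⊓ m y := by decide
    have mj : ∀ x y, m x = m y → x = y := by decide
    have kmono : Monotone k := by
      intro x y h
      fin_cases x <;> fin_cases y <;> simp_all [k]
    let φ : BoundedLatticeHom (ULift.{u} (Fin 3)) (ULift.{u} (Bool × Bool)) :=
      { toFun := fun x => ⟨m x.down⟩
        map_sup' := fun x y => congrArg ULift.up (ms x.down y.down)
        map_inf' := fun x y => congrArg ULift.up (mi x.down y.down)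
        map_top' := rfl
        map_bot' := rfl }
    let f : BoundedLatticeHom (ULift.{u} (Fin 3)) D :=
      { toFun := fun x => k x.down
        map_sup' := fun x y => kmono.map_sup x.down y.down
        map_inf' := fun x y => kmono.map_inf x.down y.down
        map_top' := rfl
        map_bot' := rfl }
    obtain ⟨g, hg⟩ := H _ _ φ
      (fun x y h => ULift.ext _ _ (mj _ _ (congrArg ULift.down h))) f
    have h1 : g ⟨(true, false)⟩ = d := hg ⟨1⟩
    refine ⟨g ⟨(false, true)⟩, ?_, ?_⟩
    · rw [← h1, ← map_inf, ← map_bot g]; rfl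
    · rw [← h1, ← map_sup, ← map_top g]; rfl
end
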